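/- arXiv:2604.20648 — 8 statements merged into one kernel-verified Lean document; each statement's English description precedes it below -/
import Mathlib

section
/- Consider d balls and b bins: for each ball i ∈ {1,…,d} a nonempty set S_i ⊆ {1,…,b} of allowed bins is given, and each ball i is independently placed into a bin chosen uniformly at random from S_i. Let X be the number of nonempty bins, i.e., the number of j ∈ {1,…,b} such that some ball is placed in bin j. Then for every real t with 0 < t ≤ E[X], the probability that X < E[X] − t is strictly less than exp(−t²/(2·E[X])). -/
open MeasureTheory

lemma aux_compl {b : ℕ} (ν : Measure (Fin b)) [IsProbabilityMeasure ν] (J : Finset (Fin b)) :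
    ν.real ((J : Set (Fin b))ᶜ) ≤ ∏ j ∈ J, ν.real ({j}ᶜ) := by
  classical
  induction J using Finset.induction_on with
  | empty => simp
  | insert j J hj ih =>
    rw [Finset.prod_insert hj]
    have h1 : ν.real (((insert j J : Finset (Fin b)) : Set (Fin b))ᶜ)
        = ν.real ((J : Set (Fin b))ᶜ) - ν.real {j} := by
      rw [Finset.coe_insert, Set.insert_eq, probReal_compl_eq_one_sub (by measurability),
        probReal_compl_eq_one_sub (by measurability), measureReal_union (by simpa using hj) (by measurability)]
      ring
    have h2 : ν.real ({j}ᶜ) = 1 - ν.real {j} := probReal_compl_eq_one_sub (by measurability)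
    have h3 : ν.real ((J : Set (Fin b))ᶜ) ≤ 1 := measureReal_le_one
    have h4 : 0 ≤ ν.real {j} := measureReal_nonneg
    have h5 : 0 ≤ ν.real ({j}ᶜ) := measureReal_nonneg
    calc _ ≤ ν.real ({j}ᶜ) * ν.real ((J : Set (Fin b))ᶜ) := by rw [h1, h2]; nlinarith
      _ ≤ _ := mul_le_mul_of_nonneg_left ih h5

/-- indicator that bin `j` is empty -/
noncomputable def emptyInd {d b : ℕ} (j : Fin b) (ω : Fin d → Fin b) : ℝ :=
  if ∃ i, ω i = j then 0 else 1

lemma card_eq {d b : ℕ} (ω : Fin d → Fin b) :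
    ((Finset.univ.filter (fun j : Fin b => ∃ i, ω i = j)).card : ℝ)
      = ∑ j, (1 - emptyInd j ω) := by
  rw [Finset.card_filter]
  push_cast
  refine Finset.sum_congr rfl fun j _ => ?_
  unfold emptyInd
  split_ifs <;> simp

lemma prod_emptyInd {d b : ℕ} (J : Finset (Fin b)) (ω : Fin d → Fin b) :
    ∏ j ∈ J, emptyInd j ω
      = (Set.univ.pi fun _ : Fin d => ((J : Set (Fin b))ᶜ)).indicator 1 ω := by
  classical
  by_cases h : ω ∈ Set.univ.pi fun _ : Fin d => ((J : Set (Fin b))ᶜ)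
  · rw [Set.indicator_of_mem h]
    refine Finset.prod_eq_one fun j hj => ?_
    unfold emptyInd
    rw [if_neg]
    rintro ⟨i, rfl⟩
    exact h i trivial hj
  · rw [Set.indicator_of_notMem h]
    simp only [Set.mem_pi, Set.mem_univ, Set.mem_compl_iff, Finset.mem_coe, forall_const,
      not_forall, not_not] at h
    obtain ⟨i, hi⟩ := h
    refine Finset.prod_eq_zero hi ?_
    unfold emptyInd
    rw [if_pos ⟨i, rfl⟩]

section
variable {d b : ℕ} (ν : Fin d → Measure (Fin b)) [∀ i, IsProbabilityMeasure (ν i)]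

lemma int_prod (J : Finset (Fin b)) :
    ∫ ω, ∏ j ∈ J, emptyInd j ω ∂(Measure.pi ν) = ∏ i, (ν i).real ((J : Set (Fin b))ᶜ) := by
  simp_rw [prod_emptyInd]
  rw [integral_indicator_one (MeasurableSet.univ_pi fun i => by measurability)]
  simp [Measure.real, Measure.pi_pi, ENNReal.toReal_prod]

lemma int_one (j : Fin b) :
    ∫ ω, emptyInd j ω ∂(Measure.pi ν) = ∏ i, (ν i).real ({j}ᶜ) := by
  have := int_prod ν {j}
  simpa using this

lemma int_le (J : Finset (Fin b)) :
    ∫ ω, ∏ j ∈ J, emptyInd j ω ∂(Measure.pi ν) ≤ ∏ j ∈ J, ∫ ω, emptyInd j ω ∂(Measure.pi ν) := by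
  rw [int_prod]
  simp_rw [int_one]
  rw [Finset.prod_comm]
  exact Finset.prod_le_prod (fun _ _ => measureReal_nonneg) fun i _ => aux_compl (ν i) J

lemma int_card :
    ∫ ω, ((Finset.univ.filter (fun j : Fin b => ∃ i, ω i = j)).card : ℝ) ∂(Measure.pi ν)
      = ∑ j, (1 - ∫ ω, emptyInd j ω ∂(Measure.pi ν)) := by
  simp_rw [card_eq]
  rw [integral_finsetSum _ fun _ _ => Integrable.of_finite]
  refine Finset.sum_congr rfl fun j _ => ?_
  rw [integral_sub Integrable.of_finite Integrable.of_finite]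
  simp

lemma mgf_le (s : ℝ) (hs : 0 ≤ s) :
    ∫ ω, Real.exp (-s * ((Finset.univ.filter (fun j : Fin b => ∃ i, ω i = j)).card : ℝ))
      ∂(Measure.pi ν)
    ≤ Real.exp (-(1 - Real.exp (-s)) *
      ∫ ω, ((Finset.univ.filter (fun j : Fin b => ∃ i, ω i = j)).card : ℝ) ∂(Measure.pi ν)) := by
  classical
  set a := Real.exp (-s) with ha
  have ha0 : 0 ≤ a := (Real.exp_pos _).le
  have ha1 : a ≤ 1 := Real.exp_le_one_iff.2 (by linarith)
  have h1 : ∀ ω : Fin d → Fin b,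
      Real.exp (-s * ((Finset.univ.filter (fun j : Fin b => ∃ i, ω i = j)).card : ℝ))
      = ∑ J ∈ (Finset.univ : Finset (Fin b)).powerset,
        ((∏ j ∈ J, (1 - a)) * ∏ j ∈ Finset.univ \ J, a) * ∏ j ∈ J, emptyInd j ω := by
    intro ω
    rw [card_eq, Finset.mul_sum, Real.exp_sum]
    trans ∏ j, ((1 - a) * emptyInd j ω + a)
    · refine Finset.prod_congr rfl fun j _ => ?_
      unfold emptyInd
      split_ifs <;> simp [ha]
    · rw [Finset.prod_add]
      refine Finset.sum_congr rfl fun J _ => ?_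
      rw [Finset.prod_mul_distrib]
      ring
  simp_rw [h1]
  rw [int_card, integral_finsetSum _ fun _ _ => Integrable.of_finite]
  simp_rw [integral_const_mul]
  calc _ ≤ ∑ J ∈ (Finset.univ : Finset (Fin b)).powerset,
        ((∏ j ∈ J, (1 - a)) * ∏ j ∈ Finset.univ \ J, a)
          * ∏ j ∈ J, ∫ ω, emptyInd j ω ∂(Measure.pi ν) := by
        refine Finset.sum_le_sum fun J _ => mul_le_mul_of_nonneg_left (int_le ν J) ?_
        exact mul_nonneg (Finset.prod_nonneg fun _ _ => by linarith)
          (Finset.prod_nonneg fun _ _ => ha0)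
    _ = ∏ j, ((1 - a) * (∫ ω, emptyInd j ω ∂(Measure.pi ν)) + a) := by
        rw [Finset.prod_add]
        refine Finset.sum_congr rfl fun J _ => ?_
        rw [Finset.prod_mul_distrib]
        ring
    _ ≤ _ := by
        rw [Finset.mul_sum, Real.exp_sum]
        refine Finset.prod_le_prod (fun j _ => ?_) fun j _ => ?_
        · have : 0 ≤ ∫ ω, emptyInd j ω ∂(Measure.pi ν) := by
            rw [int_one]; exact Finset.prod_nonneg fun _ _ => measureReal_nonneg
          have h2 : 0 ≤ 1 - a := by linarith
          positivity
        · refine le_trans (le_of_eq ?_) (Real.add_one_le_exp _)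
          ring

end

lemma exp_neg_lt (s : ℝ) (hs : 0 < s) : Real.exp (-s) < 1 - s + s ^ 2 / 2 := by
  have h : StrictMonoOn (fun x : ℝ => 1 - x + x ^ 2 / 2 - Real.exp (-x)) (Set.Ici 0) := by
    refine strictMonoOn_of_deriv_pos (convex_Ici 0) (by fun_prop) fun x hx => ?_
    simp only [interior_Ici, Set.mem_Ioi] at hx
    have hd : HasDerivAt (fun x : ℝ => 1 - x + x ^ 2 / 2 - Real.exp (-x))
        (0 - 1 + (2 * x ^ 1 * 1) / 2 - Real.exp (-x) * (-1)) x := by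
      refine ((((hasDerivAt_const x (1:ℝ)).sub (hasDerivAt_id x)).add
        (((hasDerivAt_id x).pow 2).div_const 2)).sub ((hasDerivAt_id x).neg.exp)) |>.congr_deriv ?_
      simp
    rw [hd.deriv]
    have := Real.add_one_lt_exp (x := -x) (by linarith)
    linarith
  have := h (Set.self_mem_Ici) (Set.mem_Ici.2 hs.le) hs
  simp at this
  linarith



/-- **Balls into bins concentration.** `d` balls are placed independently, ball `i` uniformly
into one of its allowed bins `S i ⊆ Fin b`. If `X` is the number of nonempty bins, then for
every `0 < t ≤ E[X]`, `Pr[X < E[X] - t] < exp(-t²/(2 E[X]))`. -/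
theorem stmt_1 (d b : ℕ) (S : Fin d → Finset (Fin b)) (hS : ∀ i, (S i).Nonempty)
    (μ : Measure (Fin d → Fin b))
    (hμ : μ = Measure.pi fun i => (PMF.uniformOfFinset (S i) (hS i)).toMeasure)
    (t : ℝ) (ht : 0 < t)
    (htE : t ≤ ∫ ω, ((Finset.univ.filter (fun j : Fin b => ∃ i, ω i = j)).card : ℝ) ∂μ) :
    (μ {ω | ((Finset.univ.filter (fun j : Fin b => ∃ i, ω i = j)).card : ℝ) <
        (∫ ω, ((Finset.univ.filter (fun j : Fin b => ∃ i, ω i = j)).card : ℝ) ∂μ) - t}).toReal <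
      Real.exp (-t ^ 2 /
        (2 * ∫ ω, ((Finset.univ.filter (fun j : Fin b => ∃ i, ω i = j)).card : ℝ) ∂μ)) := by

  subst hμ
  set ν : Fin d → Measure (Fin b) := fun i => (PMF.uniformOfFinset (S i) (hS i)).toMeasure with hν
  haveI : ∀ i, IsProbabilityMeasure (ν i) := fun i => by
    simp only [hν]; infer_instance
  have hm := mgf_le ν
  set X : (Fin d → Fin b) → ℝ :=
    fun ω => ((Finset.univ.filter (fun j : Fin b => ∃ i, ω i = j)).card : ℝ) with hX
  set m := ∫ ω, X ω ∂(Measure.pi ν) with hmdef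
  have hm0 : 0 < m := lt_of_lt_of_le ht htE
  have hs : 0 < t / m := div_pos ht hm0
  have hmk := ProbabilityTheory.measure_le_le_exp_mul_mgf (μ := Measure.pi ν) (X := X)
    (t := -(t / m)) (m - t) (by linarith) Integrable.of_finite
  have h1 := hm (t / m) hs.le
  have h2 := exp_neg_lt _ hs
  calc ((Measure.pi ν) {ω | X ω < m - t}).toReal
      ≤ (Measure.pi ν).real {ω | X ω ≤ m - t} :=
        measureReal_mono (fun ω (h : X ω < m - t) => le_of_lt h)
    _ ≤ Real.exp (-(-(t / m)) * (m - t)) * Real.exp (-(1 - Real.exp (-(t / m))) * m) :=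
        hmk.trans (mul_le_mul_of_nonneg_left h1 (Real.exp_pos _).le)
    _ < _ := by
        rw [← Real.exp_add, Real.exp_lt_exp]
        have h3 := mul_lt_mul_of_pos_right h2 hm0
        have h4 : -t ^ 2 / (2 * m)
            = -(-(t / m)) * (m - t) - m + (1 - t / m + (t / m) ^ 2 / 2) * m := by
          field_simp
          ring
        rw [h4]
        linarith
end

section
/- Let C be a nonempty finite set with |C| = q, let S be a finite index set with |S| = d, and for each v ∈ S let A_v ⊆ C be a nonempty subset. Then ∑_{c ∈ C} ∏_{v ∈ S, c ∈ A_v} (1 − 1/(|A_v| + 1)) ≥ q · exp(−d/q). -/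
/-- **Expected number of available colors, lower bound.** With `|C| = q` colors, `|S| = d`
indices, and nonempty lists `A v ⊆ C`, we have
`∑_{c ∈ C} ∏_{v ∈ S, c ∈ A v} (1 - 1/(|A v|+1)) ≥ q · exp(-d/q)`. -/
theorem stmt_4 {α β : Type*} [DecidableEq α] [DecidableEq β]
    (C : Finset α) (S : Finset β) (q d : ℕ)
    (hq : C.card = q) (hCne : C.Nonempty) (hd : S.card = d)
    (A : β → Finset α) (hA : ∀ v ∈ S, A v ⊆ C) (hAne : ∀ v ∈ S, (A v).Nonempty) :
    (q : ℝ) * Real.exp (-(d : ℝ) / (q : ℝ)) ≤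
      ∑ c ∈ C, ∏ v ∈ S.filter (fun v => c ∈ A v), (1 - 1 / (((A v).card : ℝ) + 1)) := by
  have hqpos : (0 : ℝ) < q := by
    rw [← hq]; exact_mod_cast hCne.card_pos
  set x : α → ℝ := fun c => ∑ v ∈ S.filter (fun v => c ∈ A v), (1 / ((A v).card : ℝ)) with hx
  have hsum : ∑ c ∈ C, x c = d := by
    simp only [hx, Finset.sum_filter]
    rw [Finset.sum_comm]
    have h1 : ∀ v ∈ S, ∑ c ∈ C, (if c ∈ A v then 1 / ((A v).card : ℝ) else 0) = 1 := by
      intro v hv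
      rw [← Finset.sum_filter, Finset.filter_mem_eq_inter, Finset.inter_eq_right.mpr (hA v hv),
        Finset.sum_const, nsmul_eq_mul]
      have : (0 : ℝ) < (A v).card := by exact_mod_cast (hAne v hv).card_pos
      field_simp
    rw [Finset.sum_congr rfl h1]
    simp [hd]
  have hterm : ∀ c ∈ C, Real.exp (-(d : ℝ) / q) * (1 - x c + d / q) ≤
      ∏ v ∈ S.filter (fun v => c ∈ A v), (1 - 1 / (((A v).card : ℝ) + 1)) := by
    intro c _
    have h1 : Real.exp (-(d : ℝ) / q) * (1 - x c + d / q) ≤ Real.exp (-x c) := by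
      have h2 : Real.exp (-x c) = Real.exp (-(d : ℝ) / q) * Real.exp (-x c + d / q) := by
        rw [← Real.exp_add]; congr 1; ring
      rw [h2]
      apply mul_le_mul_of_nonneg_left _ (Real.exp_pos _).le
      linarith [Real.add_one_le_exp (-x c + d / q)]
    refine h1.trans ?_
    simp only [hx]
    rw [← Finset.sum_neg_distrib, Real.exp_sum]
    apply Finset.prod_le_prod
    · intro v _; exact (Real.exp_pos _).le
    · intro v hv
      have hv' := (Finset.mem_filter.mp hv).1
      have ha : (0 : ℝ) < (A v).card := by exact_mod_cast (hAne v hv').card_pos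
      have h3 : (1 - 1 / (((A v).card : ℝ) + 1)) = (1 / ((A v).card : ℝ) + 1)⁻¹ := by
        field_simp; ring
      rw [h3, Real.exp_neg]
      exact inv_anti₀ (by positivity) (Real.add_one_le_exp _)
  refine le_trans (le_of_eq ?_) (Finset.sum_le_sum hterm)
  rw [← Finset.mul_sum, Finset.sum_add_distrib, Finset.sum_sub_distrib, hsum]
  simp only [Finset.sum_const, nsmul_eq_mul, hq]
  field_simp
  ring
end

section
/- For every ε ∈ (0,1) there exists Δ₀ such that the following holds for all integers Δ ≥ Δ₀. Let C be a finite set of colors with ⊥ ∉ C and |C| ≥ (1+ε)·Δ/ln Δ, let S be a finite index set with |S| ≤ Δ, and for each v ∈ S let A_v ⊆ C be nonempty. Suppose each v ∈ S independently samples X_v uniformly at random from A_v ∪ {⊥}, and let A be the number of colors c ∈ C such that no v ∈ S samples c. Then the probability that A < Δ^{ε/2} is at most 2^{−Δ^{ε/2}/100}. -/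
open MeasureTheory

/-- The discrete measurable-space structure on `Option C`. -/
instance optionMeasurableSpace {C : Type*} : MeasurableSpace (Option C) := ⊤

lemma one_step {C : Type} [Fintype C] [DecidableEq C] (T : Finset C) (a p : C → ℝ)
    (ha0 : ∀ c, 0 ≤ a c) (ha1 : ∀ c, a c ≤ 1) (hp : ∀ c, 0 ≤ p c) :
    ∏ c ∈ T, a c + ∑ c ∈ T, p c * (∏ d ∈ T, (if d = c then 1 else a d) - ∏ d ∈ T, a d)
      ≤ ∏ c ∈ T, (a c + p c * (1 - a c)) := by
  induction T using Finset.induction_on with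
  | empty => simp
  | insert x T hx ih =>
    rw [Finset.prod_insert hx, Finset.prod_insert hx, Finset.sum_insert hx]
    have h1 : ∏ d ∈ insert x T, (if d = x then 1 else a d) = ∏ d ∈ T, a d := by
      rw [Finset.prod_insert hx]
      simp only [if_true, one_mul]
      apply Finset.prod_congr rfl
      intro d hd
      rw [if_neg (fun h : d = x => hx (h ▸ hd))]
    have h2 : ∑ c ∈ T, p c * (∏ d ∈ insert x T, (if d = c then 1 else a d) - a x * ∏ d ∈ T, a d)
        = a x * ∑ c ∈ T, p c * (∏ d ∈ T, (if d = c then 1 else a d) - ∏ d ∈ T, a d) := by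
      rw [Finset.mul_sum]
      apply Finset.sum_congr rfl
      intro c hc
      rw [Finset.prod_insert hx, if_neg (fun h : x = c => hx (h ▸ hc))]
      ring
    rw [h1, h2]
    have h3 : ∏ c ∈ T, a c ≤ ∏ c ∈ T, (a c + p c * (1 - a c)) := by
      apply Finset.prod_le_prod (fun i _ => ha0 i)
      intro i _
      nlinarith [hp i, ha1 i]
    nlinarith [mul_le_mul_of_nonneg_left ih (ha0 x),
      mul_le_mul_of_nonneg_left h3 (mul_nonneg (hp x) (sub_nonneg.2 (ha1 x)))]

/-- One vertex. -/
lemma one_step' {C : Type} [Fintype C] [DecidableEq C] (s : C → ℝ) (w : Option C → ℝ)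
    (hs0 : ∀ c, 0 ≤ s c) (hs1 : ∀ c, s c ≤ 1) (hw : ∀ o, 0 ≤ w o) (hw1 : ∑ o, w o = 1) :
    ∑ o, w o * ∏ c, (1 - s c * (if o = some c then 0 else 1))
      ≤ ∏ c, (1 - s c * (1 - w (some c))) := by
  have h := one_step Finset.univ (fun c => 1 - s c) (fun c => w (some c))
    (fun c => by linarith [hs1 c]) (fun c => by linarith [hs0 c]) (fun c => hw _)
  rw [Fintype.sum_option] at hw1 ⊢
  have e1 : ∀ c : C, ∏ d, (1 - s d * (if (some c : Option C) = some d then 0 else 1))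
      = ∏ d, (if d = c then 1 else 1 - s d) := by
    intro c
    apply Finset.prod_congr rfl
    intro d _
    by_cases hd : d = c
    · simp [hd]
    · simp [hd, Ne.symm hd]
  simp only [e1]
  have e2 : ∏ c, (1 - s c * (1 - w (some c))) = ∏ c, ((1 - s c) + w (some c) * (1 - (1 - s c))) := by
    apply Finset.prod_congr rfl
    intro d _
    ring
  rw [e2]
  refine le_trans (le_of_eq ?_) h
  simp only [mul_sub, Finset.sum_sub_distrib, ← Finset.sum_mul]
  simp
  have : w none = 1 - ∑ c, w (some c) := by linarith
  rw [this]
  ring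

lemma fin_step {C : Type} [Fintype C] [DecidableEq C] (n : ℕ) (s : C → ℝ)
    (w : Fin n → Option C → ℝ)
    (hs0 : ∀ c, 0 ≤ s c) (hs1 : ∀ c, s c ≤ 1) (hw : ∀ v o, 0 ≤ w v o)
    (hw1 : ∀ v, ∑ o, w v o = 1) :
    ∑ ω : Fin n → Option C, (∏ v, w v (ω v)) *
        ∏ c, (1 - s c * ∏ v, (if ω v = some c then 0 else 1))
      ≤ ∏ c, (1 - s c * ∏ v, (1 - w v (some c))) := by
  induction n generalizing s with
  | zero => simp
  | succ n ih =>
    have hle : ∀ v o, w v o ≤ 1 := fun v o => by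
      rw [← hw1 v]
      exact Finset.single_le_sum (fun i _ => hw v i) (Finset.mem_univ o)
    rw [← (Fin.consEquiv (fun _ : Fin (n+1) => Option C)).sum_comp, Fintype.sum_prod_type,
      Finset.sum_comm]
    simp only [Fin.consEquiv, Equiv.coe_fn_mk, Fin.prod_univ_succ, Fin.cons_zero, Fin.cons_succ]
    have key := ih (fun c => s c * (1 - w 0 (some c))) (fun v => w v.succ)
      (fun c => mul_nonneg (hs0 c) (by linarith [hle 0 (some c)]))
      (fun c => mul_le_one₀ (hs1 c) (by linarith [hle 0 (some c)]) (by linarith [hw 0 (some c)]))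
      (fun v o => hw _ _) (fun v => hw1 _)
    simp only [mul_assoc] at key ⊢
    refine le_trans (Finset.sum_le_sum ?_) key
    intro ω _
    have h := one_step' (fun c => s c * ∏ v, (if ω v = some c then 0 else 1)) (w 0)
      (fun c => mul_nonneg (hs0 c) (Finset.prod_nonneg fun i _ => by split_ifs <;> norm_num))
      (fun c => mul_le_one₀ (hs1 c) (Finset.prod_nonneg fun i _ => by split_ifs <;> norm_num)
        (Finset.prod_le_one (fun i _ => by split_ifs <;> norm_num)
          (fun i _ => by split_ifs <;> norm_num))) (hw 0) (hw1 0)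
    have h' := mul_le_mul_of_nonneg_left h
      (Finset.prod_nonneg fun i _ => hw (Fin.succ i) (ω i) : 0 ≤ ∏ v, w (Fin.succ v) (ω v))
    rw [Finset.mul_sum] at h'
    refine le_trans (le_of_eq ?_) (h'.trans (le_of_eq ?_))
    · apply Finset.sum_congr rfl
      intro o _
      rw [mul_left_comm]
      congr 3
      funext c
      ring
    · congr 1
      apply Finset.prod_congr rfl
      intro c _
      ring

lemma type_step {C V : Type} [Fintype C] [DecidableEq C] [Fintype V] [DecidableEq V] (s : C → ℝ)
    (w : V → Option C → ℝ)
    (hs0 : ∀ c, 0 ≤ s c) (hs1 : ∀ c, s c ≤ 1) (hw : ∀ v o, 0 ≤ w v o)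
    (hw1 : ∀ v, ∑ o, w v o = 1) :
    ∑ ω : V → Option C, (∏ v, w v (ω v)) *
        ∏ c, (1 - s c * ∏ v, (if ω v = some c then 0 else 1))
      ≤ ∏ c, (1 - s c * ∏ v, (1 - w v (some c))) := by
  let e := Fintype.equivFin V
  have h := fin_step (Fintype.card V) s (fun i => w (e.symm i)) hs0 hs1 (fun v => hw _)
    (fun v => hw1 _)
  have h2 : ∀ c, ∏ v, (1 - w (e.symm v) (some c)) = ∏ v, (1 - w v (some c)) := fun c =>
    e.symm.prod_comp (fun v => 1 - w v (some c))
  simp only [h2] at h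
  refine le_trans (le_of_eq ?_) h
  rw [← (Equiv.arrowCongr e (Equiv.refl (Option C))).sum_comp]
  apply Finset.sum_congr rfl
  intro ω _
  simp only [Equiv.arrowCongr_apply, Equiv.coe_refl, Function.comp, id]
  rw [e.symm.prod_comp (fun v => w v (ω v))]
  congr 1
  apply Finset.prod_congr rfl
  intro c _
  rw [e.symm.prod_comp (fun v => (if ω v = some c then (0:ℝ) else 1))]

/-- Lower bound on the expectation. -/
lemma expect_bound {C V : Type} [Fintype C] [DecidableEq C] [Fintype V]
    (A : V → Finset C) (hA : ∀ v, (A v).Nonempty) (D : ℝ) (hV : (Fintype.card V : ℝ) ≤ D)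
    (hC : 0 < (Fintype.card C : ℝ)) :
    (Fintype.card C : ℝ) * Real.exp (-(D / Fintype.card C)) ≤
      ∑ c : C, ∏ v : V, (1 - if c ∈ A v then (((A v).card : ℝ) + 1)⁻¹ else 0) := by
  set q : ℝ := (Fintype.card C : ℝ)
  set x : C → ℝ := fun c => ∑ v, if c ∈ A v then ((A v).card : ℝ)⁻¹ else 0 with hx
  have h1 : ∀ c, Real.exp (-(x c)) ≤
      ∏ v : V, (1 - if c ∈ A v then (((A v).card : ℝ) + 1)⁻¹ else 0) := by
    intro c
    rw [hx, ← Finset.sum_neg_distrib, Real.exp_sum]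
    apply Finset.prod_le_prod (fun _ _ => (Real.exp_pos _).le)
    intro v _
    split_ifs
    · have ha : (0:ℝ) < (A v).card := by exact_mod_cast (hA v).card_pos
      have h := Real.add_one_le_exp (((A v).card : ℝ)⁻¹)
      rw [Real.exp_neg]
      have e : 1 - (((A v).card : ℝ) + 1)⁻¹ = (((A v).card : ℝ)⁻¹ + 1)⁻¹ := by
        field_simp
        ring
      rw [e]
      exact inv_anti₀ (by positivity) h
    · simp
  have h2 : ∑ c, x c = Fintype.card V := by
    rw [hx, Finset.sum_comm]
    have : ∀ v, ∑ c, (if c ∈ A v then ((A v).card : ℝ)⁻¹ else 0) = 1 := by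
      intro v
      have ha : (0:ℝ) < (A v).card := by exact_mod_cast (hA v).card_pos
      rw [Finset.sum_ite_mem]
      simp [ha.ne']
    simp [this]
  refine le_trans ?_ (Finset.sum_le_sum fun c _ => h1 c)
  have h3 : ∀ c, Real.exp (-(D/q)) * (1 + D/q - x c) ≤ Real.exp (-(x c)) := by
    intro c
    have h := Real.add_one_le_exp (D/q - x c)
    have := mul_le_mul_of_nonneg_left h (Real.exp_pos (-(D/q))).le
    rw [← Real.exp_add] at this
    have e : -(D/q) + (D/q - x c) = -(x c) := by ring
    rw [e] at this
    linarith
  refine le_trans ?_ (Finset.sum_le_sum fun c _ => h3 c)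
  rw [← Finset.mul_sum, Finset.sum_sub_distrib, h2]
  simp only [Finset.sum_const, Finset.card_univ, nsmul_eq_mul]
  have e : (Fintype.card C : ℝ) * (1 + D/q) = q + D := by
    change q * _ = _
    field_simp
  rw [e, mul_comm]
  apply mul_le_mul_of_nonneg_left _ (Real.exp_pos _).le
  linarith

lemma asym (ε : ℝ) (hε : ε ∈ Set.Ioo (0 : ℝ) 1) :
    ∃ N : ℕ, ∀ Δ : ℕ, N ≤ Δ → ∀ q : ℝ, (1 + ε) * (Δ : ℝ) / Real.log (Δ : ℝ) ≤ q →
      0 < q ∧ 4 * (Δ : ℝ) ^ (ε/2) ≤ q * Real.exp (-(Δ / q)) := by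
  obtain ⟨h0, h1⟩ := hε
  have hδ : 0 < ε/(1+ε) - ε/2 := by
    have : ε/(1+ε) - ε/2 = ε * (1-ε)/(2*(1+ε)) := by field_simp; ring
    rw [this]
    have : 0 < 1 - ε := by linarith
    positivity
  have hl := (isLittleO_log_rpow_atTop hδ).bound (show (0:ℝ) < 1/4 by norm_num)
  have hl2 := (tendsto_natCast_atTop_atTop (R := ℝ)).eventually hl
  obtain ⟨N, hN⟩ := Filter.eventually_atTop.1 hl2
  refine ⟨max N 2, fun Δ hΔ q hq => ?_⟩
  have hb := hN Δ (le_trans (le_max_left _ _) hΔ)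
  have hΔ2 : (2:ℝ) ≤ Δ := by exact_mod_cast le_trans (le_max_right _ _) hΔ
  have hΔ0 : (0:ℝ) < Δ := by linarith
  have hL : 0 < Real.log Δ := Real.log_pos (by linarith)
  have hq0 : 0 < (1 + ε) * (Δ : ℝ) / Real.log (Δ : ℝ) := by positivity
  have hqp := hq0.trans_le hq
  refine ⟨hqp, ?_⟩
  rw [Real.norm_of_nonneg hL.le, Real.norm_of_nonneg (by positivity)] at hb
  have hm : Δ / q ≤ Real.log Δ / (1+ε) := by
    rw [div_le_div_iff₀ hqp (by positivity)]
    rw [div_le_iff₀ hL] at hq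
    linarith
  have hE : Real.exp (-(Real.log Δ / (1+ε))) ≤ Real.exp (-(Δ/q)) :=
    Real.exp_le_exp.2 (by linarith)
  refine le_trans ?_ (mul_le_mul hq hE (Real.exp_pos _).le hqp.le)
  have e1 : Real.exp (-(Real.log Δ / (1+ε))) = (Δ:ℝ) ^ (-(1/(1+ε))) := by
    rw [Real.rpow_def_of_pos hΔ0]; congr 1; ring
  rw [e1]
  have e2 : (Δ:ℝ) * (Δ:ℝ) ^ (-(1/(1+ε))) = (Δ:ℝ)^(ε/2) * (Δ:ℝ)^(ε/(1+ε) - ε/2) := by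
    rw [← Real.rpow_add hΔ0]
    nth_rewrite 1 [← Real.rpow_one (Δ:ℝ)]
    rw [← Real.rpow_add hΔ0]
    congr 1
    field_simp
    ring
  have e3 : (1 + ε) * (Δ : ℝ) / Real.log Δ * (Δ:ℝ) ^ (-(1/(1+ε)))
      = (1+ε) * ((Δ:ℝ)^(ε/2) * (Δ:ℝ)^(ε/(1+ε) - ε/2)) / Real.log Δ := by
    rw [← e2]; ring
  rw [e3, le_div_iff₀ hL]
  have hP : 0 < (Δ:ℝ)^(ε/2) := by positivity
  have hQ : 0 < (Δ:ℝ)^(ε/(1+ε) - ε/2) := by positivity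
  have := mul_le_mul_of_nonneg_left hb hP.le
  nlinarith [mul_pos hP hQ, mul_pos (mul_pos hP hQ) h0]

/-- **Concentration of the number of available colors.** For every `ε ∈ (0,1)` and all
sufficiently large `Δ`: with `|C| ≥ (1+ε)Δ/ln Δ` colors, at most `Δ` indices, nonempty
lists `A v ⊆ C`, and each `v` sampling `X v` uniformly and independently from
`(A v).image some ∪ {none}`, the number `A(ω)` of colors sampled by no vertex satisfies
`Pr[A(ω) < Δ^{ε/2}] ≤ 2^{-Δ^{ε/2}/100}`. -/
theorem stmt_7 (ε : ℝ) (hε : ε ∈ Set.Ioo (0 : ℝ) 1) :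
    ∃ Δ₀ : ℕ, ∀ Δ : ℕ, Δ₀ ≤ Δ →
      ∀ (C V : Type) [Fintype C] [DecidableEq C] [Fintype V],
        (1 + ε) * (Δ : ℝ) / Real.log (Δ : ℝ) ≤ (Fintype.card C : ℝ) →
        Fintype.card V ≤ Δ →
        ∀ (A : V → Finset C) (hA : ∀ v, (A v).Nonempty)
          (μ : Measure ((v : V) → Option C)),
          μ = Measure.pi (fun v =>
            (PMF.uniformOfFinset ((A v).image some ∪ {none}) ⟨none, by simp⟩).toMeasure) →
          (μ {ω | ((Finset.univ.filter
              (fun c : C => ∀ v : V, ω v ≠ some c)).card : ℝ) < (Δ : ℝ) ^ (ε / 2)}).toReal ≤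
            (2 : ℝ) ^ (-((Δ : ℝ) ^ (ε / 2)) / 100) := by
  obtain ⟨N, hN⟩ := asym ε hε
  refine ⟨N, ?_⟩
  intro Δ hΔ C V _ _ _ hC hV A hA μ hμ
  classical
  obtain ⟨hq, hK⟩ := hN Δ hΔ _ hC
  set K : ℝ := (Δ : ℝ) ^ (ε / 2) with hKdef
  have hK0 : 0 ≤ K := by positivity
  have hE := hK.trans (expect_bound A hA Δ (by exact_mod_cast hV) hq)
  set w : V → Option C → ℝ := fun v o =>
    ((PMF.uniformOfFinset ((A v).image some ∪ {none}) ⟨none, by simp⟩) o).toReal with hw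
  have hw0 : ∀ v o, 0 ≤ w v o := fun v o => ENNReal.toReal_nonneg
  have hw1 : ∀ v, ∑ o, w v o = 1 := by
    intro v
    rw [hw]
    simp only
    rw [← ENNReal.toReal_sum (fun a _ => PMF.apply_ne_top _ _), ← tsum_fintype (L := .unconditional _), PMF.tsum_coe]
    simp
  have hwc : ∀ v c, w v (some c) = if c ∈ A v then (((A v).card : ℝ) + 1)⁻¹ else 0 := by
    intro v c
    have hcard : ((A v).image some ∪ {none} : Finset (Option C)).card = (A v).card + 1 := by
      rw [Finset.card_union_of_disjoint (by simp),
        Finset.card_image_of_injective _ (Option.some_injective C)]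
      simp
    refine (congrArg ENNReal.toReal (PMF.uniformOfFinset_apply _ (some c))).trans ?_
    rw [hcard]
    by_cases hc : c ∈ A v
    · simp [hc]
      rw [ENNReal.toReal_add (by simp) (by simp)]
      simp
    · simp [hc]
  haveI : MeasurableSingletonClass (Option C) := ⟨fun _ => trivial⟩
  have hsing : ∀ ω : V → Option C, μ.real {ω} = ∏ v, w v (ω v) := by
    intro ω
    rw [Measure.real, hμ, Measure.pi_singleton, ENNReal.toReal_prod]
    apply Finset.prod_congr rfl
    intro v _
    rw [PMF.toMeasure_apply_singleton _ _ (MeasurableSet.singleton _)]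
  haveI : IsProbabilityMeasure μ := by rw [hμ]; infer_instance
  set E : Set (V → Option C) := {ω | ((Finset.univ.filter
              (fun c : C => ∀ v : V, ω v ≠ some c)).card : ℝ) < K} with hEdef
  have hmeas : μ.real E = ∑ ω ∈ Finset.univ.filter (· ∈ E), ∏ v, w v (ω v) := by
    simp only [← hsing]
    rw [sum_measureReal_singleton]
    simp
  change μ.real E ≤ _
  have hstep := type_step (fun _ : C => (1/2:ℝ)) w (fun _ => by norm_num) (fun _ => by norm_num)
    hw0 hw1
  have hprod : ∀ ω : V → Option C, ∏ c : C, (1 - (1/2:ℝ) * ∏ v, (if ω v = some c then 0 else 1))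
      = (2:ℝ) ^ (-((Finset.univ.filter (fun c : C => ∀ v : V, ω v ≠ some c)).card : ℝ)) := by
    intro ω
    have : ∀ c : C, (1 - (1/2:ℝ) * ∏ v, (if ω v = some c then 0 else 1)) =
        if (∀ v : V, ω v ≠ some c) then (1/2:ℝ) else 1 := by
      intro c
      split_ifs with h
      · rw [Finset.prod_eq_one (fun v _ => if_neg (h v))]; norm_num
      · push Not at h
        obtain ⟨v, hv⟩ := h
        have hz : ∏ v, (if ω v = some c then (0:ℝ) else 1) = 0 :=
          Finset.prod_eq_zero (Finset.mem_univ v) (if_pos hv)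
        rw [hz]; norm_num
    simp only [this]
    rw [← Finset.prod_filter, Finset.prod_const, Real.rpow_neg (by norm_num), Real.rpow_natCast,
      one_div, inv_pow]
  simp only [hprod] at hstep
  have hR : ∏ c : C, (1 - (1/2:ℝ) * ∏ v, (1 - w v (some c))) ≤ Real.exp (-(2 * K)) := by
    have : ∏ c : C, (1 - (1/2:ℝ) * ∏ v, (1 - w v (some c))) ≤
        ∏ c : C, Real.exp (-((1/2:ℝ) * ∏ v, (1 - w v (some c)))) := by
      have hle : ∀ v o, w v o ≤ 1 := fun v o => by
        rw [← hw1 v]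
        exact Finset.single_le_sum (fun i _ => hw0 v i) (Finset.mem_univ o)
      apply Finset.prod_le_prod
      · intro c _
        have : ∏ v, (1 - w v (some c)) ≤ 1 := Finset.prod_le_one
          (fun v _ => by linarith [hle v (some c)]) (fun v _ => by linarith [hw0 v (some c)])
        linarith
      · intro c _
        exact Real.one_sub_le_exp_neg _
    refine this.trans ?_
    rw [← Real.exp_sum, Real.exp_le_exp, Finset.sum_neg_distrib, ← Finset.mul_sum]
    simp only [hwc]
    linarith
  have hchain : μ.real E ≤ (2:ℝ)^K * Real.exp (-(2*K)) := by
    rw [hmeas]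
    refine le_trans ?_ (mul_le_mul_of_nonneg_left (hstep.trans hR) (by positivity))
    rw [Finset.mul_sum]
    refine le_trans ?_ (Finset.sum_le_sum_of_subset_of_nonneg
      (Finset.subset_univ (Finset.univ.filter (· ∈ E))) ?_)
    · apply Finset.sum_le_sum
      intro ω hω
      have hω' : ((Finset.univ.filter (fun c : C => ∀ v : V, ω v ≠ some c)).card : ℝ) < K :=
        (Finset.mem_filter.1 hω).2
      rw [mul_left_comm, ← Real.rpow_add (by norm_num)]
      apply le_mul_of_one_le_right (Finset.prod_nonneg fun i _ => hw0 _ _)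
      exact Real.one_le_rpow (by norm_num) (by linarith)
    · intro ω _ _
      have := Finset.prod_nonneg (s := Finset.univ) fun i _ => hw0 i (ω i)
      positivity
  refine hchain.trans ?_
  rw [Real.rpow_def_of_pos (by norm_num), Real.rpow_def_of_pos (by norm_num), ← Real.exp_add,
    Real.exp_le_exp]
  have l1 : Real.log 2 ≤ 0.7 := by linarith [Real.log_two_lt_d9]
  nlinarith [mul_le_mul_of_nonneg_right l1 hK0]
end

section
/- Let G be a finite simple graph on vertex set V, let b ≥ 1, let p : V → Fin b be a partition labeling, and for a labeling r define indeg_r(v) := |{u ∈ N(v) : r(u) = r(v)}|, the number of neighbors of v in its own part. Let w ∈ V, let j ∈ Fin b with j ≠ p(w), and let p' := Function.update p w j (the labeling obtained from p by moving w to part j). Then ∑_{v ∈ V} indeg_{p'}(v) − ∑_{v ∈ V} indeg_p(v) = 2·(|{u ∈ N(w) : p(u) = j}| − |{u ∈ N(w) : p(u) = p(w)}|). In particular, if |{u ∈ N(w) : p(u) = p(w)}| > (1 + 1/k)·Δ/b and |{u ∈ N(w) : p(u) = j}| ≤ Δ/b for reals Δ > 0 and an integer k ≥ 1, then the sum of induced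 degrees decreases by at least (2/k)·(Δ/b). -/
/-- **Effect of moving a vertex between parts on the sum of induced degrees.** For a
labeling `p : V → Fin b` and `indeg_r v = |{u ∈ N(v) : r u = r v}|`, moving `w` to a part
`j ≠ p w` changes `∑ v, indeg v` by exactly
`2·(|{u ∈ N(w) : p u = j}| - |{u ∈ N(w) : p u = p w}|)`; in particular, if `w` violates
the degree invariant (`> (1+1/k)·Δ/b` same-part neighbors) and `j` is a low-degree part
(`≤ Δ/b` neighbors), the sum decreases by at least `(2/k)·(Δ/b)`. -/
theorem stmt_11 {V : Type*} [Fintype V] [DecidableEq V]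
    (G : SimpleGraph V) [DecidableRel G.Adj]
    (b : ℕ) (hb : 1 ≤ b) (p : V → Fin b) (w : V) (j : Fin b) (hj : j ≠ p w)
    (p' : V → Fin b) (hp' : p' = Function.update p w j) :
    ((∑ v, (((G.neighborFinset v).filter (fun u => p' u = p' v)).card : ℤ)) -
        ∑ v, (((G.neighborFinset v).filter (fun u => p u = p v)).card : ℤ) =
      2 * ((((G.neighborFinset w).filter (fun u => p u = j)).card : ℤ) -
        (((G.neighborFinset w).filter (fun u => p u = p w)).card : ℤ))) ∧
    (∀ (Δ : ℝ) (k : ℕ), 0 < Δ → 1 ≤ k →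
      (1 + 1 / (k : ℝ)) * Δ / (b : ℝ) <
        (((G.neighborFinset w).filter (fun u => p u = p w)).card : ℝ) →
      (((G.neighborFinset w).filter (fun u => p u = j)).card : ℝ) ≤ Δ / (b : ℝ) →
      (∑ v, (((G.neighborFinset v).filter (fun u => p' u = p' v)).card : ℝ)) ≤
        (∑ v, (((G.neighborFinset v).filter (fun u => p u = p v)).card : ℝ)) -
          (2 / (k : ℝ)) * (Δ / (b : ℝ))) := by
  have hcard : ∀ (r : V → Fin b) (c : Fin b) (v : V),
      (((G.neighborFinset v).filter (fun u => r u = c)).card : ℤ) =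
        ∑ u, if G.Adj v u ∧ r u = c then (1 : ℤ) else 0 := by
    intro r c v
    rw [Finset.sum_boole]
    congr 2
    ext u
    simp
  have hmain : (∑ v, (((G.neighborFinset v).filter (fun u => p' u = p' v)).card : ℤ)) -
        ∑ v, (((G.neighborFinset v).filter (fun u => p u = p v)).card : ℤ) =
      2 * ((((G.neighborFinset w).filter (fun u => p u = j)).card : ℤ) -
        (((G.neighborFinset w).filter (fun u => p u = p w)).card : ℤ)) := by
    simp only [hcard]
    rw [← Finset.sum_sub_distrib, ← Finset.sum_sub_distrib]
    simp only [← Finset.sum_sub_distrib]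
    set D : V → ℤ := fun u => (if G.Adj w u ∧ p u = j then (1 : ℤ) else 0) -
      (if G.Adj w u ∧ p u = p w then (1 : ℤ) else 0) with hD
    have key : ∀ v u, ((if G.Adj v u ∧ p' u = p' v then (1 : ℤ) else 0) -
        (if G.Adj v u ∧ p u = p v then (1 : ℤ) else 0)) =
        (if v = w then D u else 0) + (if u = w then D v else 0) := by
      intro v u
      subst hp'
      by_cases hv : v = w
      · subst hv
        by_cases hu : u = v
        · subst hu; simp [hD]
        · simp [hD, hu]
      · by_cases hu : u = w
        · subst hu
          simp [hD, hv, G.adj_comm v u, eq_comm]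
        · simp [hu, hv]
    simp only [key, Finset.sum_add_distrib]
    rw [Finset.sum_comm]
    simp
    ring
  refine ⟨hmain, ?_⟩
  intro Δ k hΔ hk h1 h2
  have hR := congrArg (Int.cast : ℤ → ℝ) hmain
  push_cast at hR
  have h3 : (1 + 1 / (k : ℝ)) * Δ / (b : ℝ) = Δ / b + (1 / k) * (Δ / b) := by ring
  have h4 : (2 / (k : ℝ)) * (Δ / (b : ℝ)) = 2 * ((1 / k) * (Δ / b)) := by ring
  rw [h3] at h1
  rw [h4]
  linarith
end

section
/- Let k ≥ 2 be an integer and let Δ ≥ 3 be a real number. Define b_k := (1/2)·Δ^{2/(2k−1)} and, for a real x > 1, define c_k(x) := (k+1)·(2k−1)·x/ln x and c_{k−1}(x) := k·(2k−3)·x/ln x. Then c_{k−1}((1 + 1/k)·Δ/b_k) ≤ c_k(Δ)/b_k. -/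
/-- **Palette-size recursion.** For an integer `k ≥ 2` and a real `Δ ≥ 3`, with
`b_k = (1/2)·Δ^{2/(2k-1)}`, `c_k(x) = (k+1)(2k-1)·x/ln x`, and
`c_{k-1}(x) = k(2k-3)·x/ln x`, one has `c_{k-1}((1+1/k)·Δ/b_k) ≤ c_k(Δ)/b_k`. -/
theorem stmt_13 (k : ℕ) (hk : 2 ≤ k) (Δ : ℝ) (hΔ : 3 ≤ Δ)
    (b : ℝ) (hb : b = (1 / 2) * Δ ^ ((2 : ℝ) / (2 * (k : ℝ) - 1))) :
    (k : ℝ) * (2 * (k : ℝ) - 3) * ((1 + 1 / (k : ℝ)) * Δ / b) /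
        Real.log ((1 + 1 / (k : ℝ)) * Δ / b) ≤
      ((k : ℝ) + 1) * (2 * (k : ℝ) - 1) * Δ / Real.log Δ / b := by
  have hk' : (2 : ℝ) ≤ k := by exact_mod_cast hk
  have hD : 0 < Δ := by linarith
  have hL : 0 < Real.log Δ := Real.log_pos (by linarith)
  have hp : 0 < Δ ^ ((2 : ℝ) / (2 * (k : ℝ) - 1)) := Real.rpow_pos_of_pos hD _
  have hb0 : 0 < b := by rw [hb]; positivity
  have hk0 : (0 : ℝ) < k := by linarith
  have h1 : (0 : ℝ) < 2 * k - 1 := by linarith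
  have h3 : (0 : ℝ) < 2 * k - 3 := by linarith
  have hlb : Real.log b = 2 / (2 * k - 1) * Real.log Δ - Real.log 2 := by
    rw [hb, Real.log_mul (by norm_num) hp.ne', Real.log_rpow hD, one_div, Real.log_inv]
    ring
  have hX : Real.log ((1 + 1 / (k : ℝ)) * Δ / b) =
      Real.log (1 + 1 / (k : ℝ)) + Real.log Δ - Real.log b := by
    rw [Real.log_div (by positivity) hb0.ne', Real.log_mul (by positivity) hD.ne']
  have hc : 0 ≤ Real.log (1 + 1 / (k : ℝ)) := by
    apply Real.log_nonneg
    have : 0 < 1 / (k : ℝ) := by positivity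
    linarith
  have h2 : 0 < Real.log 2 := Real.log_pos (by norm_num)
  have key : (2 * (k : ℝ) - 1) * Real.log ((1 + 1 / (k : ℝ)) * Δ / b) =
      (2 * k - 1) * (Real.log (1 + 1 / (k : ℝ)) + Real.log 2)
        + (2 * k - 3) * Real.log Δ := by
    rw [hX, hlb]
    field_simp
    ring
  have hge : (2 * (k : ℝ) - 3) * Real.log Δ ≤
      (2 * (k : ℝ) - 1) * Real.log ((1 + 1 / (k : ℝ)) * Δ / b) := by
    rw [key]
    have : 0 ≤ (2 * (k : ℝ) - 1) * (Real.log (1 + 1 / (k : ℝ)) + Real.log 2) := by positivity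
    linarith
  have hXpos : 0 < Real.log ((1 + 1 / (k : ℝ)) * Δ / b) := by
    have : 0 < (2 * (k : ℝ) - 3) * Real.log Δ := by positivity
    exact pos_of_mul_pos_right (lt_of_lt_of_le this hge) h1.le
  have e1 : (k : ℝ) * (2 * (k : ℝ) - 3) * ((1 + 1 / (k : ℝ)) * Δ / b)
      = ((k + 1) * Δ / b) * (2 * k - 3) := by
    field_simp
  have e2 : ((k : ℝ) + 1) * (2 * (k : ℝ) - 1) * Δ / Real.log Δ / b
      = ((k + 1) * Δ / b) * (2 * k - 1) / Real.log Δ := by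
    field_simp
  rw [e1, e2, div_le_div_iff₀ hXpos hL, mul_assoc, mul_assoc]
  exact mul_le_mul_of_nonneg_left hge (by positivity)
end

section
/- For every ε ∈ (0,1) there exists Δ₀ such that for every integer Δ ≥ Δ₀, every finite triangle-free simple graph G with maximum degree at most Δ admits a proper vertex coloring with at most (1+ε)·Δ/ln Δ colors; that is, G is q-colorable for q = ⌊(1+ε)·Δ/ln Δ⌋. -/
open Classical in
/-- Functions that are proper on `S`. -/
noncomputable def PC {V : Type} [Fintype V] (G : SimpleGraph V) (q : ℕ) (S : Finset V) :
    Finset (V → Fin q) :=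
  Finset.univ.filter (fun c => ∀ u ∈ S, ∀ w ∈ S, G.Adj u w → c u ≠ c w)

open Classical in
/-- Colors available at `u` with respect to `S`. -/
noncomputable def AV {V : Type} (G : SimpleGraph V) {q : ℕ} (S : Finset V)
    (c : V → Fin q) (u : V) : Finset (Fin q) :=
  Finset.univ.filter (fun x => ∀ w ∈ S, G.Adj u w → c w ≠ x)

open Classical in
lemma swap_count {V : Type} [Fintype V] (G : SimpleGraph V) (q : ℕ) (S : Finset V)
    (v : V) (hv : v ∉ S) (Φ : (V → Fin q) → Prop)
    (hΦ : ∀ c x, Φ (Function.update c v x) ↔ Φ c) :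
    q * ((PC G q (insert v S)).filter Φ).card =
      ∑ c ∈ (PC G q S).filter Φ, (AV G S c v).card := by
  rw [← Finset.card_sigma]
  have h1 : q * ((PC G q (insert v S)).filter Φ).card =
      (((PC G q (insert v S)).filter Φ) ×ˢ (Finset.univ : Finset (Fin q))).card := by
    rw [Finset.card_product, Finset.card_univ, Fintype.card_fin, mul_comm]
  rw [h1]
  have hne : ∀ w ∈ S, w ≠ v := fun w hw h => hv (h ▸ hw)
  refine Finset.card_bij' (fun p _ => ⟨Function.update p.1 v p.2, p.1 v⟩)
    (fun p _ => (Function.update p.1 v p.2, p.1 v)) ?_ ?_ ?_ ?_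
  · rintro ⟨c, x⟩ h
    simp only [Finset.mem_product, Finset.mem_filter, PC, Finset.mem_univ, true_and, and_true,
      Finset.mem_sigma, AV, hΦ] at h ⊢
    obtain ⟨h, h2⟩ := h
    refine ⟨⟨?_, h2⟩, ?_⟩
    · intro u hu w hw ha
      rw [Function.update_of_ne (hne u hu), Function.update_of_ne (hne w hw)]
      exact h u (Finset.mem_insert_of_mem hu) w (Finset.mem_insert_of_mem hw) ha
    · intro w hw ha
      rw [Function.update_of_ne (hne w hw)]
      exact h w (Finset.mem_insert_of_mem hw) v (Finset.mem_insert_self _ _) ha.symm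
  · rintro ⟨c, x⟩ h
    simp only [Finset.mem_product, Finset.mem_filter, PC, Finset.mem_univ, true_and, and_true,
      Finset.mem_sigma, AV, hΦ] at h ⊢
    obtain ⟨⟨h, h2⟩, h3⟩ := h
    refine ⟨?_, h2⟩
    intro u hu w hw ha
    rcases Finset.mem_insert.1 hu with hu1 | hu1
    · subst hu1
      rcases Finset.mem_insert.1 hw with rfl | hw
      · exact absurd ha (G.loopless.irrefl _)
      · rw [Function.update_self, Function.update_of_ne (hne w hw)]
        exact (h3 w hw ha).symm
    · rcases Finset.mem_insert.1 hw with hw1 | hw1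
      · subst hw1
        rw [Function.update_self, Function.update_of_ne (hne u hu1)]
        exact (h3 u hu1 ha.symm)
      · rw [Function.update_of_ne (hne u hu1), Function.update_of_ne (hne w hw1)]
        exact h u hu1 w hw1 ha
  · rintro ⟨c, x⟩ h
    simp
  · rintro ⟨c, x⟩ h
    simp

lemma one_sub_sum_le_prod {V : Type} (B : Finset V) (f : V → ℝ) (h0 : ∀ w ∈ B, 0 ≤ f w)
    (h1 : ∀ w ∈ B, f w ≤ 1) : 1 - ∑ w ∈ B, (1 - f w) ≤ ∏ w ∈ B, f w := by
  classical
  induction B using Finset.induction_on with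
  | empty => simp
  | insert a B ha ih =>
    rw [Finset.sum_insert ha, Finset.prod_insert ha]
    have i := ih (fun w hw => h0 w (Finset.mem_insert_of_mem hw))
      (fun w hw => h1 w (Finset.mem_insert_of_mem hw))
    have a0 := h0 a (Finset.mem_insert_self _ _)
    have a1 := h1 a (Finset.mem_insert_self _ _)
    have p1 : ∏ w ∈ B, f w ≤ 1 := Finset.prod_le_one
      (fun w hw => h0 w (Finset.mem_insert_of_mem hw))
      (fun w hw => h1 w (Finset.mem_insert_of_mem hw))
    nlinarith

open Classical in
lemma analytic {V : Type} (q : ℕ) (N : Finset V) (L : V → Finset (Fin q))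
    (hL : ∀ w ∈ N, (L w).Nonempty) (t D m : ℝ) (ht : 1 < t) (hm : 0 ≤ m)
    (hN : (N.card : ℝ) ≤ D) :
    Real.exp (-m) * ((1 + m) * ((q : ℝ) - ((N.filter (fun w => ((L w).card : ℝ) < t)).card : ℝ))
        - D * (t / (t - 1)))
      ≤ ∑ x : Fin q, ∏ w ∈ N, ((((L w).erase x).card : ℝ) / ((L w).card : ℝ)) := by
  set r : V → Fin q → ℝ := fun w x => (((L w).erase x).card : ℝ) / ((L w).card : ℝ) with hr
  set Bd := N.filter (fun w => ((L w).card : ℝ) < t)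
  set Gd := N.filter (fun w => ¬ ((L w).card : ℝ) < t)
  have hpos : ∀ w ∈ N, (0:ℝ) < ((L w).card : ℝ) := fun w hw => by
    exact_mod_cast (hL w hw).card_pos
  have hreq : ∀ w ∈ N, ∀ x, r w x = 1 - (if x ∈ L w then 1 else 0) / ((L w).card : ℝ) := by
    intro w hw x
    have := hpos w hw
    simp only [hr]
    split_ifs with h
    · have h2 := Finset.card_erase_add_one h
      have h3 : (((L w).erase x).card : ℝ) + 1 = (L w).card := by exact_mod_cast h2
      field_simp
      linarith
    · rw [Finset.erase_eq_of_notMem h]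
      field_simp
      ring
  have hr0 : ∀ w x, 0 ≤ r w x := fun w x => by positivity
  have hr1 : ∀ w ∈ N, ∀ x, r w x ≤ 1 := fun w hw x => by
    rw [hreq w hw x]
    have := hpos w hw
    have : (0:ℝ) ≤ (if x ∈ L w then 1 else 0) / ((L w).card : ℝ) := by
      split_ifs <;> positivity
    linarith
  set p : Fin q → ℝ := fun x => ∏ w ∈ Bd, r w x with hp
  set s : Fin q → ℝ := fun x => ∑ w ∈ Gd, (if x ∈ L w then 1 else 0) / (((L w).card : ℝ) - 1)
    with hs
  have hBN : ∀ w ∈ Bd, w ∈ N := fun w hw => (Finset.mem_filter.1 hw).1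
  have hGN : ∀ w ∈ Gd, w ∈ N := fun w hw => (Finset.mem_filter.1 hw).1
  have hGt : ∀ w ∈ Gd, t ≤ ((L w).card : ℝ) := fun w hw => not_lt.1 (Finset.mem_filter.1 hw).2
  have hp0 : ∀ x, 0 ≤ p x := fun x => Finset.prod_nonneg fun w _ => hr0 w x
  have hp1 : ∀ x, p x ≤ 1 := fun x =>
    Finset.prod_le_one (fun w _ => hr0 w x) (fun w hw => hr1 w (hBN w hw) x)
  have hs0 : ∀ x, 0 ≤ s x := fun x => Finset.sum_nonneg fun w hw => by
    have := hGt w hw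
    split_ifs
    · apply div_nonneg <;> linarith
    · simp
  have hprod : ∀ x, p x * Real.exp (-(s x)) ≤ ∏ w ∈ N, r w x := by
    intro x
    rw [← Finset.prod_filter_mul_prod_filter_not N (fun w => ((L w).card : ℝ) < t)]
    refine mul_le_mul_of_nonneg_left ?_ (hp0 x)
    rw [hs, ← Finset.sum_neg_distrib, Real.exp_sum]
    refine Finset.prod_le_prod (fun w _ => (Real.exp_pos _).le) ?_
    intro w hw
    have h1 := hGt w hw
    rw [hreq w (hGN w hw)]
    split_ifs with hx
    · set a := ((L w).card : ℝ)
      have ha : 0 < a - 1 := by linarith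
      rw [Real.exp_neg]
      have h2 := Real.add_one_le_exp (1 / (a - 1))
      have h3 : 1 / (a - 1) + 1 = a / (a - 1) := by field_simp; ring
      rw [h3] at h2
      have h4 : 1 - 1 / a = (a / (a - 1))⁻¹ := by
        have : a ≠ 0 := by linarith
        field_simp
      rw [h4]
      exact inv_anti₀ (div_pos (by linarith) ha) h2
    · simp
  have hpsum : (q : ℝ) - Bd.card ≤ ∑ x, p x := by
    have h1 : ∀ x, 1 - ∑ w ∈ Bd, (if x ∈ L w then 1 else 0) / ((L w).card : ℝ) ≤ p x := by
      intro x
      have h := one_sub_sum_le_prod Bd (fun w => r w x) (fun w _ => hr0 w x)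
        (fun w hw => hr1 w (hBN w hw) x)
      refine le_trans (le_of_eq ?_) h
      congr 1
      refine Finset.sum_congr rfl fun w hw => ?_
      rw [hreq w (hBN w hw) x]
      ring
    calc (q : ℝ) - Bd.card
        = ∑ x : Fin q, (1 - ∑ w ∈ Bd, (if x ∈ L w then 1 else 0) / ((L w).card : ℝ)) := by
          rw [Finset.sum_sub_distrib, Finset.sum_comm]
          have : ∀ w ∈ Bd, ∑ x : Fin q, (if x ∈ L w then (1:ℝ) else 0) / ((L w).card : ℝ) = 1 := by
            intro w hw
            rw [← Finset.sum_div]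
            have := hpos w (hBN w hw)
            simp [this.ne']
          rw [Finset.sum_congr rfl this]
          simp
      _ ≤ _ := Finset.sum_le_sum fun x _ => h1 x
  have hssum : ∑ x, s x ≤ D * (t / (t - 1)) := by
    rw [hs, Finset.sum_comm]
    have h0 : 0 ≤ t / (t - 1) := div_nonneg (by linarith) (by linarith)
    have : ∀ w ∈ Gd, ∑ x : Fin q, (if x ∈ L w then (1:ℝ) else 0) / (((L w).card : ℝ) - 1)
        ≤ t / (t - 1) := by
      intro w hw
      rw [← Finset.sum_div]
      have := hGt w hw
      simp only [Finset.sum_ite_mem, Finset.univ_inter, Finset.sum_const, nsmul_eq_mul, mul_one]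
      rw [div_le_div_iff₀ (by linarith) (by linarith)]
      nlinarith
    refine (Finset.sum_le_card_nsmul _ _ _ this).trans ?_
    rw [nsmul_eq_mul]
    refine mul_le_mul_of_nonneg_right (le_trans ?_ hN) h0
    exact_mod_cast Finset.card_filter_le _ _
  have htan : ∀ x, Real.exp (-m) * ((1 + m) * p x - s x) ≤ p x * Real.exp (-(s x)) := by
    intro x
    have h1 := Real.add_one_le_exp (m - s x)
    have h2 : Real.exp (-(s x)) = Real.exp (-m) * Real.exp (m - s x) := by
      rw [← Real.exp_add]; ring_nf
    rw [h2]
    have h3 : (1 + m) * p x - s x ≤ p x * Real.exp (m - s x) := by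
      have := mul_le_mul_of_nonneg_left h1 (hp0 x)
      have := mul_le_mul_of_nonneg_right (hp1 x) (hs0 x)
      nlinarith
    have := mul_le_mul_of_nonneg_left h3 (Real.exp_pos (-m)).le
    linarith
  calc _ ≤ Real.exp (-m) * ((1 + m) * (∑ x, p x) - ∑ x, s x) := by
        refine mul_le_mul_of_nonneg_left ?_ (Real.exp_pos _).le
        have := mul_le_mul_of_nonneg_left hpsum (by linarith : 0 ≤ 1 + m)
        linarith
    _ = ∑ x, Real.exp (-m) * ((1 + m) * p x - s x) := by
        rw [← Finset.mul_sum, Finset.sum_sub_distrib, Finset.mul_sum]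
    _ ≤ _ := Finset.sum_le_sum fun x _ => (htan x).trans (hprod x)

open Classical in
lemma fiber {V : Type} [Fintype V] (G : SimpleGraph V) (hG : G.CliqueFree 3) (q : ℕ)
    (S : Finset V) (v : V) (N : Finset V) (hN : N = S.filter (G.Adj v))
    (t D m : ℝ) (ht : 1 < t) (hm : 0 ≤ m) (hND : (N.card : ℝ) ≤ D)
    (b : V → Fin q) (hb : b ∈ PC G q S) :
    ∑ c ∈ (PC G q S).filter (fun c => ∀ w, w ∉ N → c w = b w),
      Real.exp (-m) * ((1 + m) *
        ((q : ℝ) - ((N.filter (fun w => ((AV G S c w).card : ℝ) < t)).card : ℝ))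
        - D * (t / (t - 1))) ≤
    ∑ c ∈ (PC G q S).filter (fun c => ∀ w, w ∉ N → c w = b w), ((AV G S c v).card : ℝ) := by
  have hmN : ∀ w, w ∈ N ↔ w ∈ S ∧ G.Adj v w := fun w => by rw [hN, Finset.mem_filter]
  have hind : ∀ u ∈ N, ∀ w ∈ N, ¬ G.Adj u w := by
    intro u hu w hw ha
    refine hG {v, u, w} ?_
    rw [SimpleGraph.is3Clique_triple_iff]
    exact ⟨((hmN u).1 hu).2, ((hmN w).1 hw).2, ha⟩
  set L : V → Finset (Fin q) := fun w => AV G S b w with hLd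
  set F := (PC G q S).filter (fun c => ∀ w, w ∉ N → c w = b w) with hF
  have hFpi : F = Fintype.piFinset (fun w => if w ∈ N then L w else {b w}) := by
    ext c
    simp only [hF, Finset.mem_filter, PC, Finset.mem_univ, true_and, Fintype.mem_piFinset] at hb ⊢
    constructor
    · rintro ⟨h1, h2⟩ w
      split_ifs with hw
      · simp only [hLd, AV, Finset.mem_filter, Finset.mem_univ, true_and]
        intro z hz ha
        rw [← h2 z (fun h => hind w hw z h ha)]
        exact h1 z hz w ((hmN w).1 hw).1 ha.symm
      · simpa using h2 w hw
    · intro h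
      have h2 : ∀ w, w ∉ N → c w = b w := fun w hw => by simpa [hw] using h w
      have h3 : ∀ w ∈ N, ∀ z ∈ S, G.Adj w z → b z ≠ c w := fun w hw => by
        simpa [hw, hLd, AV] using h w
      refine ⟨?_, h2⟩
      intro u hu w hw ha
      by_cases huN : u ∈ N
      · have hwN : w ∉ N := fun h => hind u huN w h ha
        rw [h2 w hwN]
        exact (h3 u huN w hw ha).symm
      · rw [h2 u huN]
        by_cases hwN : w ∈ N
        · exact h3 w hwN u hu ha.symm
        · rw [h2 w hwN]
          exact hb u hu w hw ha
  have hbF : b ∈ F := by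
    rw [hF, Finset.mem_filter]; exact ⟨hb, fun _ _ => rfl⟩
  have hLne : ∀ w ∈ N, (L w).Nonempty := by
    intro w hw
    rw [hFpi, Fintype.mem_piFinset] at hbF
    have := hbF w
    rw [if_pos hw] at this
    exact ⟨_, this⟩
  have hAVc : ∀ c ∈ F, ∀ w ∈ N, AV G S c w = L w := by
    intro c hc w hw
    have h2 := (Finset.mem_filter.1 hc).2
    ext x
    simp only [hLd, AV, Finset.mem_filter, Finset.mem_univ, true_and]
    refine forall_congr' fun z => forall_congr' fun _ => forall_congr' fun ha => ?_
    rw [h2 z (fun h => hind w hw z h ha)]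
  have hbad : ∀ c ∈ F, N.filter (fun w => ((AV G S c w).card : ℝ) < t)
      = N.filter (fun w => ((L w).card : ℝ) < t) := by
    intro c hc
    refine Finset.filter_congr fun w hw => ?_
    rw [hAVc c hc w hw]
  have hLHS := Finset.sum_congr (s₁ := F) rfl (fun c hc => by
    rw [hbad c hc] : ∀ c ∈ F, Real.exp (-m) * ((1 + m) *
        ((q : ℝ) - ((N.filter (fun w => ((AV G S c w).card : ℝ) < t)).card : ℝ))
        - D * (t / (t - 1))) = Real.exp (-m) * ((1 + m) *
        ((q : ℝ) - ((N.filter (fun w => ((L w).card : ℝ) < t)).card : ℝ))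
        - D * (t / (t - 1))))
  rw [hLHS, Finset.sum_const, nsmul_eq_mul]
  have hA := analytic q N L hLne t D m ht hm hND
  refine (mul_le_mul_of_nonneg_left hA (Nat.cast_nonneg _)).trans (le_of_eq ?_)
  have hcardF : (F.card : ℝ) = ∏ w ∈ N, ((L w).card : ℝ) := by
    rw [hFpi, Fintype.card_piFinset]
    push_cast
    rw [← Finset.prod_subset (Finset.subset_univ N)]
    · exact Finset.prod_congr rfl fun w hw => by rw [if_pos hw]
    · intro w _ hw
      rw [if_neg hw]; simp
  have hcardx : ∀ x : Fin q, ((F.filter (fun c => ∀ w ∈ N, c w ≠ x)).card : ℝ)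
      = ∏ w ∈ N, (((L w).erase x).card : ℝ) := by
    intro x
    have : F.filter (fun c => ∀ w ∈ N, c w ≠ x) =
        Fintype.piFinset (fun w => if w ∈ N then (L w).erase x else {b w}) := by
      ext c
      rw [hFpi]
      simp only [Finset.mem_filter, Fintype.mem_piFinset]
      constructor
      · rintro ⟨h1, h2⟩ w
        have := h1 w
        split_ifs at this ⊢ with hw
        · exact Finset.mem_erase.2 ⟨h2 w hw, this⟩
        · exact this
      · intro h
        refine ⟨fun w => ?_, fun w hw => ?_⟩
        · have := h w
          split_ifs at this ⊢ with hw
          · exact (Finset.mem_erase.1 this).2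
          · exact this
        · have := h w
          rw [if_pos hw] at this
          exact (Finset.mem_erase.1 this).1
    rw [this, Fintype.card_piFinset]
    push_cast
    rw [← Finset.prod_subset (Finset.subset_univ N)]
    · exact Finset.prod_congr rfl fun w hw => by rw [if_pos hw]
    · intro w _ hw
      rw [if_neg hw]; simp
  have hAVv : ∀ c, ((AV G S c v).card : ℝ) = ∑ x : Fin q, if ∀ w ∈ N, c w ≠ x then (1:ℝ) else 0 := by
    intro c
    rw [Finset.sum_boole]
    congr 2
    ext x
    simp only [AV, Finset.mem_filter, Finset.mem_univ, true_and, hmN]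
    exact ⟨fun h w hw => h w hw.1 hw.2, fun h w h1 h2 => h w ⟨h1, h2⟩⟩
  simp_rw [hAVv]
  rw [Finset.sum_comm, Finset.mul_sum]
  refine Finset.sum_congr rfl fun x _ => ?_
  rw [Finset.sum_boole, hcardx x, hcardF, ← Finset.prod_mul_distrib]
  refine Finset.prod_congr rfl fun w hw => ?_
  have : ((L w).card : ℝ) ≠ 0 := by exact_mod_cast (hLne w hw).card_pos.ne'
  field_simp

open Classical in
lemma total {V : Type} [Fintype V] (G : SimpleGraph V) (hG : G.CliqueFree 3) (q : ℕ)
    (S : Finset V) (v : V) (N : Finset V) (hN : N = S.filter (G.Adj v))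
    (t D m : ℝ) (ht : 1 < t) (hm : 0 ≤ m) (hND : (N.card : ℝ) ≤ D) :
    ∑ c ∈ PC G q S,
      Real.exp (-m) * ((1 + m) *
        ((q : ℝ) - ((N.filter (fun w => ((AV G S c w).card : ℝ) < t)).card : ℝ))
        - D * (t / (t - 1))) ≤
    ∑ c ∈ PC G q S, ((AV G S c v).card : ℝ) := by
  set π : (V → Fin q) → ({w // w ∉ N} → Fin q) := fun c w => c w with hπ
  have hmaps : ∀ c ∈ PC G q S, π c ∈ (PC G q S).image π := fun c hc =>
    Finset.mem_image_of_mem _ hc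
  rw [← Finset.sum_fiberwise_of_maps_to hmaps, ← Finset.sum_fiberwise_of_maps_to hmaps]
  refine Finset.sum_le_sum fun y hy => ?_
  obtain ⟨b, hb, rfl⟩ := Finset.mem_image.1 hy
  have : (PC G q S).filter (fun c => π c = π b) =
      (PC G q S).filter (fun c => ∀ w, w ∉ N → c w = b w) := by
    refine Finset.filter_congr fun c _ => ?_
    rw [funext_iff]
    simp [hπ]
  rw [this]
  exact fiber G hG q S v N hN t D m ht hm hND b hb

open Classical in
lemma step {V : Type} [Fintype V] (G : SimpleGraph V) (hG : G.CliqueFree 3) (q : ℕ)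
    (hq : 0 < q) (t D m l : ℝ) (ht : 1 < t) (hm : 0 ≤ m) (hl : 0 < l)
    (hD : ∀ v (S : Finset V), ((S.filter (G.Adj v)).card : ℝ) ≤ D)
    (hmain : l ≤ Real.exp (-m) * ((1 + m) * ((q : ℝ) - D * (t / l)) - D * (t / (t - 1)))) :
    ∀ (n : ℕ) (S : Finset V), S.card = n → ∀ v, v ∉ S →
      l * ((PC G q S).card : ℝ) ≤ q * ((PC G q (insert v S)).card : ℝ) := by
  intro n
  induction n using Nat.strong_induction_on with
  | _ n ih =>
  intro S hS v hv
  set N := S.filter (G.Adj v) with hN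
  have hq' : (0:ℝ) < q := by exact_mod_cast hq
  have h0 := swap_count G q S v hv (fun _ => True) (fun _ _ => Iff.rfl)
  simp only [Finset.filter_true] at h0
  have h0' : (q : ℝ) * ((PC G q (insert v S)).card : ℝ) =
      ∑ c ∈ PC G q S, ((AV G S c v).card : ℝ) := by exact_mod_cast h0
  rw [h0']
  refine le_trans ?_ (total G hG q S v N hN t D m ht hm (hD v S))
  set P := ((PC G q S).card : ℝ) with hP
  have hP0 : 0 ≤ P := Nat.cast_nonneg _
  -- bad counts
  have hbad : ∀ u ∈ N, (((PC G q S).filter (fun c => ((AV G S c u).card : ℝ) < t)).card : ℝ)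
      ≤ (t / l) * P := by
    intro u hu
    have huS : u ∈ S := (Finset.mem_filter.1 hu).1
    have hins : insert u (S.erase u) = S := Finset.insert_erase huS
    have hAV : ∀ c : V → Fin q, AV G (S.erase u) c u = AV G S c u := by
      intro c
      ext x
      simp only [AV, Finset.mem_filter, Finset.mem_univ, true_and, Finset.mem_erase]
      exact ⟨fun h w hw ha => h w ⟨ha.ne', hw⟩ ha, fun h w hw ha => h w hw.2 ha⟩
    have h1 := swap_count G q (S.erase u) u (Finset.notMem_erase u S)
      (fun c => ((AV G S c u).card : ℝ) < t) (by
        intro c x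
        have : AV G S (Function.update c u x) u = AV G S c u := by
          ext y
          simp only [AV, Finset.mem_filter, Finset.mem_univ, true_and]
          refine forall_congr' fun z => forall_congr' fun _ => forall_congr' fun ha => ?_
          rw [Function.update_of_ne ha.ne']
        rw [this])
    rw [hins] at h1
    have h2 := ih (S.erase u).card (by rw [← hS]; exact Finset.card_erase_lt_of_mem huS)
      (S.erase u) rfl u (Finset.notMem_erase u S)
    rw [hins] at h2
    set X := (((PC G q S).filter (fun c => ((AV G S c u).card : ℝ) < t)).card : ℝ)
    have h1' : (q : ℝ) * X ≤ t * ((PC G q (S.erase u)).card : ℝ) := by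
      have : (q : ℝ) * X = ∑ c ∈ (PC G q (S.erase u)).filter
          (fun c => ((AV G S c u).card : ℝ) < t), ((AV G (S.erase u) c u).card : ℝ) := by
        have h5 := congrArg (Nat.cast : ℕ → ℝ) h1
        rw [Nat.cast_mul, Nat.cast_sum] at h5
        exact h5
      rw [this]
      have h3 : ∀ c ∈ (PC G q (S.erase u)).filter
          (fun c => ((AV G S c u).card : ℝ) < t), ((AV G (S.erase u) c u).card : ℝ) ≤ t := by
        intro c hc
        rw [hAV]
        exact (Finset.mem_filter.1 hc).2.le
      refine (Finset.sum_le_card_nsmul _ _ _ h3).trans ?_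
      rw [nsmul_eq_mul, mul_comm]
      refine mul_le_mul_of_nonneg_left ?_ (by linarith)
      exact_mod_cast Finset.card_filter_le _ _
    rw [div_mul_eq_mul_div, le_div_iff₀ hl]
    have h4 : (q : ℝ) * (X * l) ≤ q * (t * P) := by
      have := mul_le_mul_of_nonneg_left h1' hl.le
      have := mul_le_mul_of_nonneg_left h2 (by linarith : 0 ≤ t)
      nlinarith
    exact le_of_mul_le_mul_left h4 hq'
  have hB : ∑ c ∈ PC G q S, ((N.filter (fun w => ((AV G S c w).card : ℝ) < t)).card : ℝ)
      ≤ D * (t / l) * P := by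
    have : ∑ c ∈ PC G q S, ((N.filter (fun w => ((AV G S c w).card : ℝ) < t)).card : ℝ)
        = ∑ u ∈ N, (((PC G q S).filter (fun c => ((AV G S c u).card : ℝ) < t)).card : ℝ) := by
      simp_rw [← Finset.sum_boole]
      rw [Finset.sum_comm]
    rw [this]
    refine (Finset.sum_le_card_nsmul _ _ _ hbad).trans ?_
    rw [nsmul_eq_mul, mul_assoc]
    exact mul_le_mul_of_nonneg_right (hD v S)
      (mul_nonneg (div_nonneg (by linarith) hl.le) hP0)
  set Y := ∑ c ∈ PC G q S, ((N.filter (fun w => ((AV G S c w).card : ℝ) < t)).card : ℝ)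
  have hsum : ∑ c ∈ PC G q S,
      Real.exp (-m) * ((1 + m) *
        ((q : ℝ) - ((N.filter (fun w => ((AV G S c w).card : ℝ) < t)).card : ℝ))
        - D * (t / (t - 1))) =
      Real.exp (-m) * ((1 + m) * (q * P - Y) - D * (t / (t - 1)) * P) := by
    rw [← Finset.mul_sum, Finset.sum_sub_distrib, ← Finset.mul_sum, Finset.sum_sub_distrib]
    simp only [Finset.sum_const, nsmul_eq_mul]
    ring
  rw [hsum]
  calc l * P ≤ Real.exp (-m) * ((1 + m) * ((q : ℝ) - D * (t / l)) - D * (t / (t - 1))) * P :=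
        mul_le_mul_of_nonneg_right hmain hP0
    _ = Real.exp (-m) * ((1 + m) * (q * P - D * (t / l) * P) - D * (t / (t - 1)) * P) := by ring
    _ ≤ _ := by
        refine mul_le_mul_of_nonneg_left ?_ (Real.exp_pos _).le
        have := mul_le_mul_of_nonneg_left hB (by linarith : 0 ≤ 1 + m)
        linarith

open Classical in
lemma colorable_of {V : Type} [Fintype V] (G : SimpleGraph V) (hG : G.CliqueFree 3) (q : ℕ)
    (hq : 0 < q) (t D m l : ℝ) (ht : 1 < t) (hm : 0 ≤ m) (hl : 0 < l)
    (hD : ∀ v (S : Finset V), ((S.filter (G.Adj v)).card : ℝ) ≤ D)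
    (hmain : l ≤ Real.exp (-m) * ((1 + m) * ((q : ℝ) - D * (t / l)) - D * (t / (t - 1)))) :
    G.Colorable q := by
  have hq' : (0:ℝ) < q := by exact_mod_cast hq
  have key : ∀ S : Finset V, 0 < ((PC G q S).card : ℝ) := by
    intro S
    induction S using Finset.induction_on with
    | empty =>
      have : (fun _ => ⟨0, hq⟩ : V → Fin q) ∈ PC G q ∅ := by simp [PC]
      exact_mod_cast Finset.card_pos.2 ⟨_, this⟩
    | insert v S hv ihS =>
      have h := step G hG q hq t D m l ht hm hl hD hmain S.card S rfl v hv
      have : 0 < (q:ℝ) * ((PC G q (insert v S)).card : ℝ) := lt_of_lt_of_le (mul_pos hl ihS) h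
      exact pos_of_mul_pos_right this hq'.le
  have h := key Finset.univ
  obtain ⟨c, hc⟩ := Finset.card_pos.1 (by exact_mod_cast h : 0 < (PC G q Finset.univ).card)
  simp only [PC, Finset.mem_filter, Finset.mem_univ, true_and, true_imp_iff] at hc
  exact ⟨SimpleGraph.Coloring.mk c (fun {u w} ha => hc u w ha)⟩

/-- Numerical part. -/
lemma numeric (ε : ℝ) (h0 : 0 < ε) (h1 : ε < 1) :
    ∃ Δ₀ : ℕ, ∀ Δ : ℕ, Δ₀ ≤ Δ → ∃ t m l : ℝ, 1 < t ∧ 0 ≤ m ∧ 0 < l ∧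
      0 < ⌊(1 + ε) * (Δ : ℝ) / Real.log (Δ : ℝ)⌋₊ ∧
      l ≤ Real.exp (-m) * ((1 + m) * ((⌊(1 + ε) * (Δ : ℝ) / Real.log (Δ : ℝ)⌋₊ : ℝ)
        - Δ * (t / l)) - Δ * (t / (t - 1))) := by
  set t : ℝ := 1 + 4 / ε with ht
  set a : ℝ := ε / 12 with ha
  have ha0 : 0 < a := by positivity
  have ht1 : 1 < t := by rw [ht]; have : 0 < 4 / ε := by positivity
                         linarith
  have E1 := (isLittleO_log_rpow_atTop ha0).bound (c := min 1 (ε / (4 * t))) (by positivity)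
  have E2 := (isLittleO_log_rpow_atTop one_pos).bound (c := ε / 4) (by positivity)
  have E := (E1.and (E2.and (Filter.eventually_ge_atTop (Real.exp 1))))
  have E' := tendsto_natCast_atTop_atTop.eventually E
  obtain ⟨n, hn⟩ := Filter.eventually_atTop.1 E'
  refine ⟨n, fun Δ hΔ => ?_⟩
  obtain ⟨e1, e2, e3⟩ := hn Δ hΔ
  set D : ℝ := (Δ : ℝ)
  have hD : 0 < D := lt_of_lt_of_le (Real.exp_pos 1) e3
  set T := Real.log D with hT
  have hT1 : 1 ≤ T := (Real.le_log_iff_exp_le hD).2 e3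
  set l := D ^ a with hl
  have hl0 : 0 < l := Real.rpow_pos_of_pos hD a
  rw [Real.norm_of_nonneg (by linarith), Real.norm_of_nonneg (by positivity)] at e1 e2
  rw [Real.rpow_one] at e2
  have e1a : T ≤ l := e1.trans (by
    have := mul_le_mul_of_nonneg_right (min_le_left 1 (ε / (4 * t))) hl0.le
    linarith)
  have e1b : T ≤ ε / (4 * t) * l := e1.trans
    (mul_le_mul_of_nonneg_right (min_le_right 1 (ε / (4 * t))) hl0.le)
  set q : ℕ := ⌊(1 + ε) * D / T⌋₊ with hq
  have hqlow : (1 + ε) * D / T - 1 < (q : ℝ) := by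
    have := Nat.lt_floor_add_one ((1 + ε) * D / T)
    linarith
  have hT0 : 0 < T := by linarith
  have f1 : 1 ≤ ε / 4 * (D / T) := by
    rw [← mul_div_assoc, le_div_iff₀ hT0]; linarith
  have f2 : D * (t / l) ≤ ε / 4 * (D / T) := by
    rw [← mul_div_assoc, ← mul_div_assoc, div_le_div_iff₀ hl0 hT0]
    have h2 : t * T ≤ ε / 4 * l := by
      have := mul_le_mul_of_nonneg_left e1b (by linarith : 0 ≤ t)
      have h3 : t * (ε / (4 * t) * l) = ε / 4 * l := by field_simp
      linarith
    have := mul_le_mul_of_nonneg_left h2 hD.le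
    linarith
  set Q := (q : ℝ) - D * (t / l) with hQ
  have hDT : 0 < D / T := div_pos hD hT0
  have hQlow : (1 + ε / 2) * (D / T) ≤ Q := by
    have : (1 + ε) * D / T = (1 + ε) * (D / T) := by ring
    rw [this] at hqlow
    rw [hQ]; linarith
  have hQ0 : 0 < Q := lt_of_lt_of_le (by positivity) hQlow
  have htt : t / (t - 1) = 1 + ε / 4 := by
    rw [ht]; field_simp; ring
  refine ⟨t, D * (t / (t - 1)) / Q, l, ht1, ?_, hl0, ?_, ?_⟩
  · rw [htt]; positivity
  · have : (0:ℝ) < q := by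
      have : 0 < D * (t / l) := by positivity
      linarith
    exact_mod_cast this
  · rw [htt]
    have hm : D * (1 + ε / 4) / Q ≤ T * (1 - ε / 6) := by
      rw [div_le_iff₀ hQ0]
      have h5 : 0 ≤ T * (1 - ε / 6) := mul_nonneg hT0.le (by linarith)
      refine le_trans ?_ (mul_le_mul_of_nonneg_left hQlow h5)
      have : T * (1 - ε / 6) * ((1 + ε / 2) * (D / T)) = D * ((1 - ε / 6) * (1 + ε / 2)) := by
        field_simp
      rw [this]
      refine mul_le_mul_of_nonneg_left ?_ hD.le
      nlinarith
    have hsimp : (1 + D * (1 + ε / 4) / Q) * Q - D * (1 + ε / 4) = Q := by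
      field_simp; ring
    rw [hsimp]
    have hexp : Real.exp (-(T * (1 - ε / 6))) ≤ Real.exp (-(D * (1 + ε / 4) / Q)) :=
      Real.exp_le_exp.2 (by linarith)
    have hQ2 : D / T ≤ Q := le_trans (by nlinarith) hQlow
    have hfin : l ≤ Real.exp (-(T * (1 - ε / 6))) * (D / T) := by
      rw [← mul_div_assoc, le_div_iff₀ hT0]
      have hDe : D = Real.exp T := (Real.exp_log hD).symm
      have hle : l = Real.exp (T * a) := by rw [hl, Real.rpow_def_of_pos hD]
      calc l * T ≤ l * l := mul_le_mul_of_nonneg_left e1a hl0.le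
        _ = Real.exp (-(T * (1 - ε / 6))) * Real.exp T := by
          rw [hle, ← Real.exp_add, ← Real.exp_add, ha]; ring_nf
        _ = _ := by rw [← hDe]
    refine hfin.trans ?_
    exact mul_le_mul hexp hQ2 hDT.le (Real.exp_pos _).le

/-- **Johansson/Molloy theorem.** For every `ε ∈ (0,1)` and all sufficiently large `Δ`,
every finite triangle-free graph of maximum degree at most `Δ` is properly colorable with
`⌊(1+ε)·Δ/ln Δ⌋` colors. -/
theorem stmt_14 (ε : ℝ) (hε : ε ∈ Set.Ioo (0 : ℝ) 1) :
    ∃ Δ₀ : ℕ, ∀ Δ : ℕ, Δ₀ ≤ Δ →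
      ∀ (V : Type) [Fintype V] (G : SimpleGraph V) [DecidableRel G.Adj],
        G.CliqueFree 3 → (∀ v, G.degree v ≤ Δ) →
        G.Colorable ⌊(1 + ε) * (Δ : ℝ) / Real.log (Δ : ℝ)⌋₊ := by
  obtain ⟨Δ₀, h⟩ := numeric ε hε.1 hε.2
  refine ⟨Δ₀, fun Δ hΔ V _ G _ hG hdeg => ?_⟩
  obtain ⟨t, m, l, ht, hm, hl, hq, hmain⟩ := h Δ hΔ
  refine colorable_of G hG _ hq t Δ m l ht hm hl ?_ hmain
  intro v S
  have h1 : (S.filter (fun w => G.Adj v w)).card ≤ G.degree v := by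
    rw [← SimpleGraph.card_neighborFinset_eq_degree]
    refine Finset.card_le_card fun w hw => ?_
    rw [SimpleGraph.mem_neighborFinset]
    exact (Finset.mem_filter.1 hw).2
  have h2 := h1.trans (hdeg v)
  have h3 : ((S.filter (fun w => G.Adj v w)).card : ℝ) ≤ Δ := by exact_mod_cast h2
  convert h3
end

section
/- For every ε ∈ (0,1) there exists Δ₀ such that for every integer Δ ≥ Δ₀ the following holds. Let G be a finite triangle-free simple graph with maximum degree at most Δ and set q := ⌊(1+ε)·Δ/ln Δ⌋. Then there exists a partial coloring φ : V → Option (Fin q) such that: (i) φ is proper, i.e., for every edge (u,v), if φ(u) and φ(v) are both of the form some c, some c' then c ≠ c'; (ii) every vertex v has at least Δ^{ε/2} available colors, i.e., |{c ∈ Fin q : ∀ u ∈ N(v), φ(u) ≠ some c}| ≥ Δ^{ε/2}; and (iii) every vertex v has at most ε·q/2 uncolored neighbors, i.e., |{u ∈ N(v) : φ(u) = none}| ≤ ε·q/2. -/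
namespace JM
open Finset

variable {V : Type} [Fintype V] [DecidableEq V]

/-- Proper colorings of the subgraph induced by `S`; `none` exactly outside `S`. -/
def PC (G : SimpleGraph V) [DecidableRel G.Adj] (k : ℕ) (S : Finset V) :
    Finset (V → Option (Fin k)) :=
  univ.filter (fun f => (∀ u, f u = none ↔ u ∉ S) ∧
    ∀ u w, G.Adj u w → ∀ c, f u = some c → f w ≠ some c)

/-- Erase the colors on `T`. -/
def restr {k : ℕ} (T : Finset V) (f : V → Option (Fin k)) : V → Option (Fin k) :=
  fun u => if u ∈ T then none else f u

/-- Available colors at `v`. -/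
def av (G : SimpleGraph V) [DecidableRel G.Adj] {k : ℕ} (f : V → Option (Fin k)) (v : V) :
    Finset (Fin k) :=
  univ.filter (fun c => ∀ u, G.Adj v u → f u ≠ some c)

variable (G : SimpleGraph V) [DecidableRel G.Adj] {k : ℕ}

lemma mem_PC {S : Finset V} {f : V → Option (Fin k)} : f ∈ PC G k S ↔
    (∀ u, f u = none ↔ u ∉ S) ∧ ∀ u w, G.Adj u w → ∀ c, f u = some c → f w ≠ some c := by
  simp [PC]

lemma mem_av {f : V → Option (Fin k)} {v : V} {c : Fin k} :
    c ∈ av G f v ↔ ∀ u, G.Adj v u → f u ≠ some c := by simp [av]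

lemma restr_mem {S T : Finset V} {f : V → Option (Fin k)} (hf : f ∈ PC G k S) :
    restr T f ∈ PC G k (S \ T) := by
  rw [mem_PC] at *
  obtain ⟨h1, h2⟩ := hf
  refine ⟨fun u => ?_, fun u w huw c hu => ?_⟩
  · have := h1 u
    unfold restr; split_ifs <;> simp_all
  · have := h2 u w huw c
    unfold restr at *; split_ifs at * <;> simp_all

lemma av_restr {T : Finset V} (f : V → Option (Fin k)) (u : V)
    (h : ∀ w ∈ T, ¬ G.Adj u w) : av G (restr T f) u = av G f u := by
  ext c
  simp only [mem_av]
  refine forall_congr' fun w => forall_congr' fun hw => ?_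
  have : w ∉ T := fun h' => h w h' hw
  simp [restr, this]

lemma fiber_eq {R T : Finset V} (hRT : Disjoint R T) (hT : ∀ u ∈ T, ∀ w ∈ T, ¬ G.Adj u w)
    {g : V → Option (Fin k)} (hg : g ∈ PC G k R) :
    (PC G k (R ∪ T)).filter (fun f => restr T f = g) =
      Fintype.piFinset (fun u => if u ∈ T then (av G g u).map Function.Embedding.some
        else {g u}) := by
  ext f
  rw [mem_filter, Fintype.mem_piFinset]
  constructor
  · rintro ⟨hf, rfl⟩ u
    split_ifs with hu
    · rw [av_restr G f u (hT u hu)]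
      rw [mem_PC] at hf
      obtain ⟨h1, h2⟩ := hf
      rw [mem_map]
      cases hfu : f u with
      | none => have := (h1 u).1 hfu; simp_all
      | some c =>
        refine ⟨c, (mem_av G).2 fun w hw => h2 u w hw c hfu, rfl⟩
    · simp [restr, hu]
  · intro h
    rw [mem_PC] at hg
    obtain ⟨h1, h2⟩ := hg
    have hin : ∀ u ∈ T, ∃ c ∈ av G g u, f u = some c := by
      intro u hu
      have := h u
      simp only [hu, if_true, mem_map] at this
      obtain ⟨c, hc, hc'⟩ := this
      exact ⟨c, hc, hc'.symm⟩
    have hout : ∀ u, u ∉ T → f u = g u := by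
      intro u hu
      have := h u
      simpa [hu] using this
    constructor
    · rw [mem_PC]
      constructor
      · intro u
        by_cases hu : u ∈ T
        · obtain ⟨c, hc, hc'⟩ := hin u hu
          simp [hc', hu]
        · rw [hout u hu, h1]; simp [hu]
      · intro u w huw c hu hw
        by_cases huT : u ∈ T
        · have hwT : w ∉ T := fun h' => hT u huT w h' huw
          obtain ⟨c', hc, hc'⟩ := hin u huT
          rw [mem_av] at hc
          rw [hu] at hc'
          obtain rfl := Option.some.inj hc'
          exact hc w huw (by rw [← hout w hwT, hw])
        · by_cases hwT : w ∈ T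
          · obtain ⟨c', hc, hc'⟩ := hin w hwT
            rw [mem_av] at hc
            rw [hw] at hc'
            obtain rfl := Option.some.inj hc'
            exact hc u huw.symm (by rw [← hout u huT, hu])
          · exact h2 u w huw c (by rw [← hout u huT, hu]) (by rw [← hout w hwT, hw])
    · funext u
      unfold restr
      split_ifs with hu
      · symm; rw [h1]; exact fun h' => (Finset.disjoint_left.1 hRT h' hu)
      · exact hout u hu

lemma card_fiber {R T : Finset V} (hRT : Disjoint R T) (hT : ∀ u ∈ T, ∀ w ∈ T, ¬ G.Adj u w)
    {g : V → Option (Fin k)} (hg : g ∈ PC G k R) :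
    ((PC G k (R ∪ T)).filter (fun f => restr T f = g)).card = ∏ u ∈ T, (av G g u).card := by
  rw [fiber_eq G hRT hT hg, Fintype.card_piFinset, ← Finset.prod_subset (Finset.subset_univ T)]
  · refine Finset.prod_congr rfl fun u hu => by simp [hu]
  · intro u _ hu; simp [hu]

lemma card_fiber_avoid {R T : Finset V} (hRT : Disjoint R T)
    (hT : ∀ u ∈ T, ∀ w ∈ T, ¬ G.Adj u w) {v : V} (hTv : ∀ u ∈ T, G.Adj v u)
    (hRv : ∀ u ∈ R, ¬ G.Adj v u)
    {g : V → Option (Fin k)} (hg : g ∈ PC G k R) (c : Fin k) :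
    (((PC G k (R ∪ T)).filter (fun f => restr T f = g)).filter (fun f => c ∈ av G f v)).card
      = ∏ u ∈ T, ((av G g u).erase c).card := by
  have : ((PC G k (R ∪ T)).filter (fun f => restr T f = g)).filter (fun f => c ∈ av G f v)
      = Fintype.piFinset (fun u => if u ∈ T then
        ((av G g u).erase c).map Function.Embedding.some else {g u}) := by
    rw [fiber_eq G hRT hT hg]
    ext f
    rw [mem_filter, Fintype.mem_piFinset, Fintype.mem_piFinset, mem_av]
    rw [mem_PC] at hg
    constructor
    · rintro ⟨h1, h2⟩ u
      have h1u := h1 u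
      split_ifs with hu
      · simp only [hu, if_true, mem_map] at h1u
        obtain ⟨c', hc', h'⟩ := h1u
        rw [mem_map]
        refine ⟨c', mem_erase.2 ⟨?_, hc'⟩, h'⟩
        rintro rfl
        exact h2 u (hTv u hu) h'.symm
      · simpa [hu] using h1u
    · intro h
      constructor
      · intro u
        have hu' := h u
        split_ifs with hu
        · simp only [hu, if_true, mem_map] at hu'
          obtain ⟨c', hc', h'⟩ := hu'
          rw [mem_map]
          exact ⟨c', (mem_erase.1 hc').2, h'⟩
        · simpa [hu] using hu'
      · intro u hvu hfu
        have hu' := h u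
        by_cases hu : u ∈ T
        · simp only [hu, if_true, mem_map] at hu'
          obtain ⟨c', hc', h'⟩ := hu'
          rw [hfu] at h'
          obtain rfl := Option.some.inj h'
          simp at hc'
        · have hR : u ∉ R := fun h' => hRv u h' hvu
          have := (hg.1 u).2 hR
          simp [hu, this, hfu] at hu'
  rw [this, Fintype.card_piFinset, ← Finset.prod_subset (Finset.subset_univ T)]
  · refine Finset.prod_congr rfl fun u hu => by rw [if_pos hu, Finset.card_map]
  · intro u _ hu; simp [hu]

lemma card_insert {S : Finset V} {v : V} (hv : v ∉ S) :
    (PC G k (insert v S)).card = ∑ g ∈ PC G k S, (av G g v).card := by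
  have hm : ∀ f ∈ PC G k (insert v S), restr {v} f ∈ PC G k S := by
    intro f hf
    have := restr_mem G (T := {v}) hf
    rwa [show insert v S \ {v} = S by ext x; simp; aesop] at this
  rw [Finset.card_eq_sum_card_fiberwise hm]
  refine Finset.sum_congr rfl fun g hg => ?_
  have := card_fiber G (R := S) (T := {v}) (by simpa using hv) (by simp) hg
  rw [show S ∪ {v} = insert v S by ext; simp [or_comm]] at this
  simpa using this

lemma small_le {S : Finset V} {u : V} (hu : u ∈ S) (t : ℕ) :
    ((PC G k S).filter (fun f => (av G f u).card < t)).card ≤ (PC G k (S.erase u)).card * t := by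
  have hm : ∀ f ∈ (PC G k S).filter (fun f => (av G f u).card < t),
      restr {u} f ∈ PC G k (S.erase u) := by
    intro f hf
    have := restr_mem G (T := {u}) (mem_filter.1 hf).1
    rwa [Finset.sdiff_singleton_eq_erase] at this
  rw [Finset.card_eq_sum_card_fiberwise hm, ← smul_eq_mul]
  refine Finset.sum_le_card_nsmul _ _ _ fun g hg => ?_
  have := card_fiber G (R := S.erase u) (T := {u}) (by simp) (by simp) hg
  rw [show S.erase u ∪ {u} = S by ext x; simp; by_cases x = u <;> aesop] at this
  rw [prod_singleton] at this
  by_cases hgt : (av G g u).card < t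
  · refine le_trans (Finset.card_le_card ?_) (this.le.trans hgt.le)
    intro f; simp only [mem_filter]; tauto
  · rw [Finset.card_eq_zero.2]
    · exact Nat.zero_le _
    · rw [Finset.filter_eq_empty_iff]
      rintro f hf rfl
      apply hgt
      rw [av_restr G f u (by simp)]
      exact (mem_filter.1 hf).2

lemma real_aux (n t : ℕ) (ht : 2 ≤ t) (hn : t ≤ n) :
    (n : ℝ) * Real.exp (-(1 / ((n : ℝ) - 1))) ≤ ((n - 1 : ℕ) : ℝ) := by
  have h2 : (2 : ℝ) ≤ n := by exact_mod_cast ht.trans hn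
  rw [Nat.cast_sub (by omega), Nat.cast_one, Real.exp_neg]
  have := Real.add_one_le_exp (1 / ((n : ℝ) - 1))
  have h3 : (n : ℝ) ≤ (n - 1) * Real.exp (1 / ((n : ℝ) - 1)) := by
    calc (n : ℝ) = (n - 1) * (1 / ((n : ℝ) - 1) + 1) := by
          have : (n : ℝ) - 1 ≠ 0 := by linarith
          field_simp; ring
      _ ≤ _ := by gcongr; linarith
  rw [← div_eq_mul_inv, div_le_iff₀ (Real.exp_pos _)]
  exact h3

lemma local_bound {R T : Finset V} (hRT : Disjoint R T)
    (hT : ∀ u ∈ T, ∀ w ∈ T, ¬ G.Adj u w) {v : V} (hTv : ∀ u ∈ T, G.Adj v u)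
    (hRv : ∀ u ∈ R, ¬ G.Adj v u)
    {g : V → Option (Fin k)} (hg : g ∈ PC G k R) (Δ t : ℕ) (ht : 2 ≤ t) (hTΔ : T.card ≤ Δ)
    (k' a M : ℝ) (ha : 0 ≤ a)
    (hM : ((T.filter (fun u => (av G g u).card < t)).card : ℝ) ≤ M)
    (hk' : k' ≤ k - t * M) (hak : (Δ : ℝ) * (t / (t - 1)) ≤ a * k') :
    (((PC G k (R ∪ T)).filter (fun f => restr T f = g)).card : ℝ) * (k' * Real.exp (-a)) ≤
      ∑ f ∈ (PC G k (R ∪ T)).filter (fun f => restr T f = g), ((av G f v).card : ℝ) := by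
  set F := (PC G k (R ∪ T)).filter (fun f => restr T f = g) with hF
  set sm := T.filter (fun u => (av G g u).card < t) with hsm
  set bg := T.filter (fun u => ¬ (av G g u).card < t) with hbg
  set B : Finset (Fin k) := sm.biUnion (fun u => av G g u) with hB
  have ht2 : (2 : ℝ) ≤ t := by exact_mod_cast ht
  have hBcard : (B.card : ℝ) ≤ t * M := by
    have h1 : B.card ≤ sm.card * t := Finset.card_biUnion_le_card_mul _ _ _ fun u hu =>
      (mem_filter.1 hu).2.le
    have h2 : (B.card : ℝ) ≤ sm.card * t := by exact_mod_cast h1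
    nlinarith
  set O := univ \ B with hO
  have hOcard : k' ≤ (O.card : ℝ) := by
    have h1 : O.card + B.card = k := by
      rw [hO, Finset.card_sdiff_add_card_eq_card (subset_univ _)]; simp
    have h2 : (O.card : ℝ) + B.card = k := by exact_mod_cast h1
    linarith
  -- exponent
  set X : Fin k → ℝ := fun c => ∑ u ∈ bg, if c ∈ av G g u then 1 / (((av G g u).card : ℝ) - 1)
    else 0 with hX
  have hcount : ∑ f ∈ F, ((av G f v).card : ℝ) =
      ∑ c : Fin k, ((F.filter (fun f => c ∈ av G f v)).card : ℝ) := by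
    have h1 : ∀ f ∈ F, ((av G f v).card : ℝ) = ∑ c : Fin k, if c ∈ av G f v then (1:ℝ) else 0 := by
      intro f _; simp
    rw [Finset.sum_congr rfl h1, Finset.sum_comm]
    refine Finset.sum_congr rfl fun c _ => by simp
  have hc : ∀ c ∈ O, (F.card : ℝ) * Real.exp (-(X c)) ≤
      ((F.filter (fun f => c ∈ av G f v)).card : ℝ) := by
    intro c hcO
    have hcB : ∀ u ∈ sm, c ∉ av G g u := by
      intro u hu hcu
      exact (mem_sdiff.1 hcO).2 (mem_biUnion.2 ⟨u, hu, hcu⟩)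
    rw [hF, card_fiber_avoid G hRT hT hTv hRv hg c, card_fiber G hRT hT hg]
    have hXT : X c = ∑ u ∈ T, if (¬ (av G g u).card < t) then
        (if c ∈ av G g u then 1 / (((av G g u).card : ℝ) - 1) else 0) else 0 := by
      rw [hX]; simp only [hbg]; rw [Finset.sum_filter]
    rw [hXT, ← Finset.sum_neg_distrib, Real.exp_sum]
    push_cast
    rw [← Finset.prod_mul_distrib]
    refine Finset.prod_le_prod (fun u _ => by positivity) fun u hu => ?_
    by_cases hcu : c ∈ av G g u
    · have hbig : ¬ (av G g u).card < t := fun h' => hcB u (mem_filter.2 ⟨hu, h'⟩) hcu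
      rw [if_pos hbig, if_pos hcu, Finset.card_erase_of_mem hcu]
      exact real_aux _ t ht (not_lt.1 hbig)
    · rw [Finset.erase_eq_of_notMem hcu]
      simp [hcu]
  have hXsum : ∑ c ∈ O, X c ≤ Δ * (t / (t - 1)) := by
    have hpos : ∀ c, ∀ u ∈ bg, 0 ≤ (if c ∈ av G g u then 1 / (((av G g u).card : ℝ) - 1)
        else 0) := by
      intro c u hu
      have : t ≤ (av G g u).card := not_lt.1 (mem_filter.1 hu).2
      have : (t : ℝ) ≤ (av G g u).card := by exact_mod_cast this
      split_ifs
      · apply div_nonneg <;> linarith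
      · exact le_rfl
    calc ∑ c ∈ O, X c ≤ ∑ c, X c := Finset.sum_le_sum_of_subset_of_nonneg (subset_univ _)
          fun c _ _ => Finset.sum_nonneg (hpos c)
      _ = ∑ u ∈ bg, ((av G g u).card : ℝ) * (1 / (((av G g u).card : ℝ) - 1)) := by
          rw [hX, Finset.sum_comm]
          refine Finset.sum_congr rfl fun u _ => ?_
          rw [← Finset.sum_filter, Finset.sum_const, nsmul_eq_mul]; simp
      _ ≤ ∑ u ∈ bg, ((t : ℝ) / (t - 1)) := by
          refine Finset.sum_le_sum fun u hu => ?_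
          have : t ≤ (av G g u).card := not_lt.1 (mem_filter.1 hu).2
          have : (t : ℝ) ≤ (av G g u).card := by exact_mod_cast this
          rw [mul_one_div, div_le_div_iff₀ (by linarith) (by linarith)]
          linarith
      _ = bg.card * ((t : ℝ) / (t - 1)) := by rw [Finset.sum_const, nsmul_eq_mul]
      _ ≤ _ := by
          have h1 : bg.card ≤ Δ := (Finset.card_filter_le _ _).trans hTΔ
          have h2 : (bg.card : ℝ) ≤ Δ := by exact_mod_cast h1
          have h3 : 0 ≤ (t : ℝ) / (t - 1) := by apply div_nonneg <;> linarith
          gcongr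
  have hexp : k' * Real.exp (-a) ≤ ∑ c ∈ O, Real.exp (-(X c)) := by
    have h1 : ∀ c ∈ O, Real.exp (-a) * (1 + a - X c) ≤ Real.exp (-(X c)) := by
      intro c _
      have := Real.add_one_le_exp (a - X c)
      calc _ ≤ Real.exp (-a) * Real.exp (a - X c) := by gcongr; linarith
        _ = _ := by rw [← Real.exp_add]; ring_nf
    refine le_trans ?_ (Finset.sum_le_sum h1)
    rw [← Finset.mul_sum, Finset.sum_sub_distrib, Finset.sum_const, nsmul_eq_mul, mul_comm]
    have : k' * (1 + a) ≤ O.card * (1 + a) := by gcongr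
    gcongr
    nlinarith
  calc (F.card : ℝ) * (k' * Real.exp (-a)) ≤ F.card * ∑ c ∈ O, Real.exp (-(X c)) := by gcongr
    _ = ∑ c ∈ O, F.card * Real.exp (-(X c)) := by rw [Finset.mul_sum]
    _ ≤ ∑ c ∈ O, ((F.filter (fun f => c ∈ av G f v)).card : ℝ) := Finset.sum_le_sum hc
    _ ≤ _ := by
      rw [hcount]
      exact Finset.sum_le_sum_of_subset_of_nonneg (subset_univ _) fun c _ _ => by positivity

lemma key (Δ t : ℕ) (hΔ : 1 ≤ Δ) (ht : 2 ≤ t) (hG : G.CliqueFree 3)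
    (hdeg : ∀ v, G.degree v ≤ Δ) (l k' a : ℝ) (hl : 0 < l) (ha : 0 ≤ a)
    (hk' : k' ≤ k - t * (2 * Δ * t / l)) (hak : (Δ : ℝ) * (t / (t - 1)) ≤ a * k')
    (hl' : 2 * l ≤ k' * Real.exp (-a)) :
    ∀ (n : ℕ) (S : Finset V), S.card = n → ∀ v, v ∉ S →
      l * (PC G k S).card ≤ (PC G k (insert v S)).card := by
  intro n
  induction n using Nat.strong_induction_on with
  | _ n ih =>
  intro S hS v hv
  set T := S.filter (fun u => G.Adj v u) with hTdef
  set R := S \ T with hRdef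
  have hTS : T ⊆ S := Finset.filter_subset _ _
  have hRT : Disjoint R T := Finset.sdiff_disjoint
  have hRuT : R ∪ T = S := Finset.sdiff_union_of_subset hTS
  have hTv : ∀ u ∈ T, G.Adj v u := fun u hu => (mem_filter.1 hu).2
  have hRv : ∀ u ∈ R, ¬ G.Adj v u := by
    intro u hu h
    exact (mem_sdiff.1 hu).2 (mem_filter.2 ⟨(mem_sdiff.1 hu).1, h⟩)
  have hT : ∀ u ∈ T, ∀ w ∈ T, ¬ G.Adj u w := by
    intro u hu w hw huw
    exact hG {v, u, w} (SimpleGraph.is3Clique_triple_iff.2 ⟨hTv u hu, hTv w hw, huw⟩)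
  have hTΔ : T.card ≤ Δ := by
    refine le_trans (Finset.card_le_card ?_) (hdeg v)
    intro u hu
    rw [SimpleGraph.mem_neighborFinset]
    exact hTv u hu
  set M : ℝ := 2 * Δ * t / l with hM
  have ht2 : (2 : ℝ) ≤ t := by exact_mod_cast ht
  have hΔ1 : (1 : ℝ) ≤ Δ := by exact_mod_cast hΔ
  have hMpos : 0 < M := by positivity
  set s : (V → Option (Fin k)) → ℝ :=
    fun f => ((T.filter (fun u => (av G f u).card < t)).card : ℝ) with hs
  have hsum : ∑ f ∈ PC G k S, s f ≤ M / 2 * (PC G k S).card := by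
    have h1 : ∑ f ∈ PC G k S, s f =
        ∑ u ∈ T, (((PC G k S).filter (fun f => (av G f u).card < t)).card : ℝ) := by
      simp only [hs, Finset.card_filter]
      push_cast
      rw [Finset.sum_comm]
    rw [h1]
    have h2 : ∀ u ∈ T, (((PC G k S).filter (fun f => (av G f u).card < t)).card : ℝ) ≤
        t / l * (PC G k S).card := by
      intro u hu
      have huS := hTS hu
      have h3 := small_le G (k := k) huS t
      have h3' : (((PC G k S).filter (fun f => (av G f u).card < t)).card : ℝ) ≤
        (PC G k (S.erase u)).card * t := by exact_mod_cast h3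
      have hcard : (S.erase u).card < n := by
        rw [← hS]; exact Finset.card_erase_lt_of_mem huS
      have h4 := ih _ hcard (S.erase u) rfl u (Finset.notMem_erase u S)
      rw [Finset.insert_erase huS] at h4
      refine h3'.trans ?_
      rw [div_mul_eq_mul_div, le_div_iff₀ hl]
      nlinarith
    refine (Finset.sum_le_sum h2).trans ?_
    rw [Finset.sum_const, nsmul_eq_mul]
    have h5 : (T.card : ℝ) ≤ Δ := by exact_mod_cast hTΔ
    calc (T.card : ℝ) * (t / l * (PC G k S).card) ≤ Δ * (t / l * (PC G k S).card) := by gcongr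
      _ = _ := by rw [hM]; ring
  set Gd := (PC G k S).filter (fun f => s f ≤ M) with hGd
  have hGdcard : ((PC G k S).card : ℝ) ≤ 2 * Gd.card := by
    have h1 : Gd.card + ((PC G k S).filter (fun f => ¬ s f ≤ M)).card = (PC G k S).card :=
      Finset.card_filter_add_card_filter_not _
    have h1' : (Gd.card : ℝ) + ((PC G k S).filter (fun f => ¬ s f ≤ M)).card
      = (PC G k S).card := by exact_mod_cast h1
    have h2 : (((PC G k S).filter (fun f => ¬ s f ≤ M)).card : ℝ) * M ≤ ∑ f ∈ PC G k S, s f := by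
      rw [← nsmul_eq_mul]
      refine (Finset.card_nsmul_le_sum _ s M fun f hf => ?_).trans
        (Finset.sum_le_sum_of_subset_of_nonneg (Finset.filter_subset _ _) fun f _ _ => ?_)
      · exact (not_le.1 (mem_filter.1 hf).2).le
      · exact Nat.cast_nonneg _
    nlinarith
  have hm : ∀ f ∈ Gd, restr T f ∈ PC G k R := fun f hf =>
    restr_mem G (mem_filter.1 hf).1
  have hsr : ∀ f, s (restr T f) = s f := by
    intro f
    simp only [hs]
    congr 2
    refine Finset.filter_congr fun u hu => ?_
    rw [av_restr G f u (hT u hu)]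
  have hmain : (Gd.card : ℝ) * (k' * Real.exp (-a)) ≤ ∑ f ∈ Gd, ((av G f v).card : ℝ) := by
    rw [← Finset.sum_fiberwise_of_maps_to hm, Finset.card_eq_sum_card_fiberwise hm]
    push_cast
    rw [Finset.sum_mul]
    refine Finset.sum_le_sum fun g hg => ?_
    by_cases hgs : s g ≤ M
    · have : Gd.filter (fun f => restr T f = g) =
          (PC G k (R ∪ T)).filter (fun f => restr T f = g) := by
        rw [hRuT]
        ext f
        simp only [hGd, mem_filter]
        constructor
        · tauto
        · rintro ⟨h1, rfl⟩
          exact ⟨⟨h1, by rwa [hsr] at hgs⟩, rfl⟩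
      rw [this]
      exact local_bound G hRT hT hTv hRv hg Δ t ht hTΔ k' a M ha hgs hk' hak
    · have : Gd.filter (fun f => restr T f = g) = ∅ := by
        rw [Finset.filter_eq_empty_iff]
        rintro f hf rfl
        rw [hsr] at hgs
        exact hgs (mem_filter.1 hf).2
      rw [this]; simp
  rw [card_insert G hv]
  push_cast
  have hfin : ∑ f ∈ Gd, ((av G f v).card : ℝ) ≤ ∑ f ∈ PC G k S, ((av G f v).card : ℝ) :=
    Finset.sum_le_sum_of_subset_of_nonneg (Finset.filter_subset _ _) fun f _ _ => by positivity
  have hG0 : (0 : ℝ) ≤ Gd.card := by positivity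
  nlinarith

lemma exists_coloring (Δ t : ℕ) (hΔ : 1 ≤ Δ) (ht : 2 ≤ t) (hG : G.CliqueFree 3)
    (hdeg : ∀ v, G.degree v ≤ Δ) (l k' a : ℝ) (hl : 0 < l) (ha : 0 ≤ a)
    (hk' : k' ≤ k - t * (2 * Δ * t / l)) (hak : (Δ : ℝ) * (t / (t - 1)) ≤ a * k')
    (hl' : 2 * l ≤ k' * Real.exp (-a)) :
    ∃ f : V → Fin k, ∀ u v, G.Adj u v → f u ≠ f v := by
  have hpos : ∀ S : Finset V, 0 < (PC G k S).card := by
    intro S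
    induction S using Finset.induction_on with
    | empty =>
      refine Finset.card_pos.2 ⟨fun _ => none, ?_⟩
      rw [mem_PC]; simp
    | insert v S hv ih =>
      have := key G Δ t hΔ ht hG hdeg l k' a hl ha hk' hak hl' _ S rfl v hv
      have h2 : (0 : ℝ) < (PC G k S).card := by exact_mod_cast ih
      have h3 : (0 : ℝ) < (PC G k (insert v S)).card := lt_of_lt_of_le (by positivity) this
      exact_mod_cast h3
  obtain ⟨f, hf⟩ := Finset.card_pos.1 (hpos univ)
  rw [mem_PC] at hf
  have h1 : ∀ u, ∃ c, f u = some c := by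
    intro u
    have := hf.1 u
    cases h : f u with
    | none => simp [h] at this
    | some c => exact ⟨c, rfl⟩
  choose c hc using h1
  refine ⟨c, fun u v huv h => hf.2 u v huv (c u) (hc u) ?_⟩
  rw [h]; exact hc v

/-- Asymptotic inequalities. -/
lemma params (ε : ℝ) (h0 : 0 < ε) (h1 : ε < 1) (t : ℕ) : ∃ N : ℕ, ∀ Δ : ℕ, N ≤ Δ →
    1 ≤ Δ ∧ 1 ≤ Real.log Δ ∧ 16 * t ^ 2 / ε ≤ Real.log Δ ∧
    2 * Real.log Δ ^ 3 ≤ (Δ : ℝ) ^ (ε / 8 / (1 + ε / 4)) ∧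
    1 ≤ ε / 8 * (Δ / Real.log Δ) ∧
    (Δ : ℝ) ^ (ε / 2) + 1 ≤ ε / 2 * (Δ / Real.log Δ) := by
  have hlog : Filter.Tendsto (fun x : ℝ => Real.log x) Filter.atTop Filter.atTop :=
    Real.tendsto_log_atTop
  have e1 := hlog.eventually_ge_atTop 1
  have e2 := hlog.eventually_ge_atTop (16 * (t:ℝ) ^ 2 / ε)
  have e3 : ∀ᶠ x : ℝ in Filter.atTop, 2 * Real.log x ^ 3 ≤ x ^ (ε / 8 / (1 + ε / 4)) := by
    have := (isLittleO_log_rpow_rpow_atTop 3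
      (show 0 < ε / 8 / (1 + ε / 4) by positivity)).bound (show (0 : ℝ) < 1 / 2 by norm_num)
    filter_upwards [this, e1, Filter.eventually_ge_atTop 1] with x hx hx1 hx2
    rw [Real.norm_of_nonneg (by positivity), Real.norm_of_nonneg (by positivity)] at hx
    have h3 : Real.log x ^ (3 : ℝ) = Real.log x ^ 3 := by
      rw [← Real.rpow_natCast]; norm_num
    rw [h3] at hx
    linarith
  have e4 : ∀ᶠ x : ℝ in Filter.atTop, Real.log x ≤ (ε / 8) * x ^ (1 / 2 : ℝ) := by
    have := (isLittleO_log_rpow_atTop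
      (show (0 : ℝ) < 1 / 2 by norm_num)).bound (show (0 : ℝ) < ε / 8 by positivity)
    filter_upwards [this, e1, Filter.eventually_ge_atTop 1] with x hx hx1 hx2
    rwa [Real.norm_of_nonneg (by positivity), Real.norm_of_nonneg (by positivity)] at hx
  have e := ((((e1.and e2).and e3).and e4).and (Filter.eventually_ge_atTop 1))
  obtain ⟨N, hN⟩ := Filter.eventually_atTop.1 (tendsto_natCast_atTop_atTop.eventually e)
  refine ⟨N, fun Δ hΔ => ?_⟩
  obtain ⟨⟨⟨⟨a1, a2⟩, a3⟩, a4⟩, a5⟩ := hN Δ hΔ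
  have hx1 : 1 ≤ (Δ : ℝ) ^ (1 / 2 : ℝ) := Real.one_le_rpow a5 (by norm_num)
  have hxx : (Δ : ℝ) ^ (1 / 2 : ℝ) * (Δ : ℝ) ^ (1 / 2 : ℝ) = Δ := by
    rw [← Real.rpow_add (by linarith)]; norm_num
  have hb : (Δ : ℝ) ^ (1 / 2 : ℝ) ≤ ε / 8 * (Δ / Real.log Δ) := by
    rw [← mul_div_assoc, le_div_iff₀ (by linarith)]
    nlinarith
  have hc : (Δ : ℝ) ^ (ε / 2) ≤ (Δ : ℝ) ^ (1 / 2 : ℝ) :=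
    Real.rpow_le_rpow_of_exponent_le a5 (by linarith)
  refine ⟨by exact_mod_cast a5, a1, a2, a3, by linarith, ?_⟩
  linarith

end JM

/-- **Existence of a good partial coloring.** For every `ε ∈ (0,1)` and all sufficiently
large `Δ`: every finite triangle-free graph of maximum degree at most `Δ` admits a proper
partial coloring `φ : V → Option (Fin q)`, `q = ⌊(1+ε)Δ/ln Δ⌋`, in which every vertex has
at least `Δ^{ε/2}` available colors and at most `ε·q/2` uncolored neighbors. -/
theorem stmt_15 (ε : ℝ) (hε : ε ∈ Set.Ioo (0 : ℝ) 1) :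
    ∃ Δ₀ : ℕ, ∀ Δ : ℕ, Δ₀ ≤ Δ →
      ∀ (V : Type) [Fintype V] [DecidableEq V] (G : SimpleGraph V) [DecidableRel G.Adj],
        G.CliqueFree 3 → (∀ v, G.degree v ≤ Δ) →
        ∃ φ : V → Option (Fin ⌊(1 + ε) * (Δ : ℝ) / Real.log (Δ : ℝ)⌋₊),
          (∀ u v, G.Adj u v → ∀ c c', φ u = some c → φ v = some c' → c ≠ c') ∧
          (∀ v, (Δ : ℝ) ^ (ε / 2) ≤
            ((Finset.univ.filter
              (fun c : Fin ⌊(1 + ε) * (Δ : ℝ) / Real.log (Δ : ℝ)⌋₊ =>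
                ∀ u ∈ G.neighborFinset v, φ u ≠ some c)).card : ℝ)) ∧
          (∀ v, (((G.neighborFinset v).filter (fun u => φ u = none)).card : ℝ) ≤
            ε * (⌊(1 + ε) * (Δ : ℝ) / Real.log (Δ : ℝ)⌋₊ : ℝ) / 2) := by
  obtain ⟨h0, h1⟩ := hε
  obtain ⟨t0, ht0⟩ := exists_nat_ge (8 / ε + 1)
  set t := t0 + 2 with htdef
  obtain ⟨N, hN⟩ := JM.params ε h0 h1 t
  refine ⟨N, fun Δ hΔ V _ _ G _ hG hdeg => ?_⟩
  obtain ⟨p1, p2, p3, p4, p5, p6⟩ := hN Δ hΔ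
  set q := ⌊(1 + ε) * (Δ : ℝ) / Real.log (Δ : ℝ)⌋₊ with hq
  set Lg := Real.log (Δ : ℝ) with hLg
  set D := (Δ : ℝ) / Lg with hD
  have hΔ1 : (1 : ℝ) ≤ Δ := by exact_mod_cast p1
  have hLpos : 0 < Lg := by linarith
  have hDpos : 0 < D := by positivity
  have hDL : D * Lg = Δ := by rw [hD]; field_simp
  set k := ⌊(1 + ε / 2) * D⌋₊ with hk
  have hk1 : (k : ℝ) ≤ (1 + ε / 2) * D := Nat.floor_le (by positivity)
  have hk2 : (1 + ε / 2) * D < k + 1 := Nat.lt_floor_add_one _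
  have hq2 : (1 + ε) * D < q + 1 := by
    have := Nat.lt_floor_add_one ((1 + ε) * (Δ : ℝ) / Lg)
    rw [hD, ← mul_div_assoc]; exact this
  have hqk : (Δ : ℝ) ^ (ε / 2) ≤ (q : ℝ) - k := by nlinarith
  have hkq : k ≤ q := by
    have : (0 : ℝ) ≤ (Δ : ℝ) ^ (ε / 2) := by positivity
    have : (k : ℝ) ≤ q := by linarith
    exact_mod_cast this
  have ht2 : 2 ≤ t := by omega
  have htR : 8 / ε + 1 ≤ (t : ℝ) - 1 := by rw [htdef]; push_cast; linarith
  have hcol : ∃ f : V → Fin k, ∀ u v, G.Adj u v → f u ≠ f v := by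
    have hηpos : 0 < (t : ℝ) - 1 := by have : 0 < 8 / ε := by positivity
                                       linarith
    have hη : (t : ℝ) / (t - 1) ≤ 1 + ε / 8 := by
      rw [div_le_iff₀ hηpos]
      have : 8 / ε * (ε / 8) = 1 := by field_simp
      nlinarith
    refine JM.exists_coloring G Δ t p1 ht2 hG hdeg (Lg ^ 2) ((1 + ε / 4) * D)
      ((1 + ε / 8) / (1 + ε / 4) * Lg) (by positivity) (by positivity) ?_ ?_ ?_
    · have h2 : (t : ℝ) * (2 * Δ * t / Lg ^ 2) ≤ ε / 8 * D := by
        have h3 : 16 * (t : ℝ) ^ 2 ≤ Lg * ε := by rwa [div_le_iff₀ h0] at p3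
        have h4 : (t : ℝ) * (2 * Δ * t / Lg ^ 2) = (2 * t ^ 2) * D / Lg := by
          rw [hD]; field_simp
        rw [h4, div_le_iff₀ hLpos]
        nlinarith
      nlinarith
    · have h5 : (1 + ε / 8) / (1 + ε / 4) * Lg * ((1 + ε / 4) * D) = (1 + ε / 8) * (D * Lg) := by
        field_simp
      rw [h5, hDL, mul_comm]
      gcongr
    · have h6 : Real.exp (-((1 + ε / 8) / (1 + ε / 4) * Lg)) * Δ =
          (Δ : ℝ) ^ (ε / 8 / (1 + ε / 4)) := by
        rw [Real.rpow_def_of_pos (by linarith)]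
        have hEL : (Δ : ℝ) = Real.exp Lg := (Real.exp_log (by linarith)).symm
        rw [← hLg]
        calc _ = Real.exp (-((1 + ε / 8) / (1 + ε / 4) * Lg)) * Real.exp Lg := by rw [← hEL]
          _ = _ := by
            rw [← Real.exp_add]
            congr 1
            field_simp; ring
      rw [← h6] at p4
      set E := Real.exp (-((1 + ε / 8) / (1 + ε / 4) * Lg)) with hE
      have hEpos : 0 < E := Real.exp_pos _
      have h7 : 2 * Lg ^ 2 ≤ D * E := by
        rw [← hDL] at p4
        have : Lg * (2 * Lg ^ 2) ≤ Lg * (D * E) := by linarith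
        exact le_of_mul_le_mul_left this hLpos
      have : 0 < ε / 4 * D * E := by positivity
      nlinarith
  obtain ⟨f, hf⟩ := hcol
  refine ⟨fun v => some (Fin.castLE hkq (f v)), ?_, ?_, ?_⟩
  · intro u v huv c c' hc hc' h
    subst h
    rw [← hc'] at hc
    exact hf u v huv (Fin.castLE_injective hkq (Option.some.inj hc))
  · intro v
    refine hqk.trans ?_
    have hsub : (Finset.univ.image (Fin.castLE hkq))ᶜ ⊆ Finset.univ.filter
        (fun c : Fin q => ∀ u ∈ G.neighborFinset v,
          (fun v => some (Fin.castLE hkq (f v))) u ≠ some c) := by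
      intro c hc
      rw [Finset.mem_filter]
      refine ⟨Finset.mem_univ _, fun u _ h => ?_⟩
      rw [Finset.mem_compl] at hc
      exact hc (Finset.mem_image.2 ⟨f u, Finset.mem_univ _, Option.some.inj h⟩)
    have h2 := Finset.card_le_card hsub
    rw [Finset.card_compl, Finset.card_image_of_injective _ (Fin.castLE_injective hkq),
      Finset.card_univ, Fintype.card_fin, Fintype.card_fin] at h2
    rw [← Nat.cast_sub hkq]
    exact_mod_cast h2
  · intro v
    have : (G.neighborFinset v).filter
        (fun u => (fun v => some (Fin.castLE hkq (f v))) u = none) = ∅ := by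
      rw [Finset.filter_eq_empty_iff]; simp
    rw [this]
    simp only [Finset.card_empty, Nat.cast_zero]
    positivity
end

section
/- Let G be a finite simple graph and let b ≥ 1 be an integer. Then there exists a labeling p : V → Fin b of the vertices into b parts such that every vertex v has at most deg(v)/b neighbors in its own part, i.e., |{u ∈ N(v) : p(u) = p(v)}| ≤ deg(v)/b for every v. -/
theorem energy_split {V : Type*} [Fintype V] [DecidableEq V]
    (G : SimpleGraph V) [DecidableRel G.Adj] (b : ℕ) (p : V → Fin b) (v : V) :
    (∑ x, ∑ y, if G.Adj x y ∧ p x = p y then 1 else 0 : ℕ) =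
      2 * (∑ y, if G.Adj v y ∧ p v = p y then 1 else 0) +
      ∑ x ∈ Finset.univ.erase v, ∑ y ∈ Finset.univ.erase v,
        if G.Adj x y ∧ p x = p y then 1 else 0 := by
  rw [← Finset.add_sum_erase _ _ (Finset.mem_univ v)]
  have h : ∀ x, (∑ y, if G.Adj x y ∧ p x = p y then 1 else 0 : ℕ) =
      (if G.Adj v x ∧ p v = p x then 1 else 0) +
      ∑ y ∈ Finset.univ.erase v, if G.Adj x y ∧ p x = p y then 1 else 0 := by
    intro x
    rw [← Finset.add_sum_erase _ _ (Finset.mem_univ v)]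
    simp only [G.adj_comm x v, eq_comm (a := p x) (b := p v)]
  have h2 : (∑ x ∈ Finset.univ.erase v, if G.Adj v x ∧ p v = p x then 1 else 0 : ℕ) =
      ∑ y, if G.Adj v y ∧ p v = p y then 1 else 0 := by
    apply Finset.sum_erase
    simp
  rw [Finset.sum_congr rfl (fun x (_ : x ∈ Finset.univ.erase v) => h x),
    Finset.sum_add_distrib, h2]
  ring

/-- **Existence of a balanced partition.** For any finite simple graph and any `b ≥ 1`
there is a labeling of the vertices into `b` parts such that every vertex `v` has at most
`deg(v)/b` neighbors in its own part. -/
theorem stmt_17 {V : Type*} [Fintype V] [DecidableEq V]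
    (G : SimpleGraph V) [DecidableRel G.Adj] (b : ℕ) (hb : 1 ≤ b) :
    ∃ p : V → Fin b, ∀ v,
      (((G.neighborFinset v).filter (fun u => p u = p v)).card : ℝ) ≤
        (G.degree v : ℝ) / (b : ℝ) := by
  have : Nonempty (Fin b) := ⟨⟨0, hb⟩⟩
  obtain ⟨p, hp⟩ := Finite.exists_min (fun p : V → Fin b =>
    (∑ x, ∑ y, if G.Adj x y ∧ p x = p y then 1 else 0 : ℕ))
  refine ⟨p, fun v => ?_⟩
  have key : ∀ c : Fin b, ((G.neighborFinset v).filter (fun u => p u = p v)).card ≤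
      ((G.neighborFinset v).filter (fun u => p u = c)).card := by
    intro c
    have h := hp (Function.update p v c)
    rw [energy_split G b p v, energy_split G b (Function.update p v c) v] at h
    have e1 : (∑ x ∈ Finset.univ.erase v, ∑ y ∈ Finset.univ.erase v,
        if G.Adj x y ∧ Function.update p v c x = Function.update p v c y then 1 else 0 : ℕ) =
        ∑ x ∈ Finset.univ.erase v, ∑ y ∈ Finset.univ.erase v,
        if G.Adj x y ∧ p x = p y then 1 else 0 := by
      refine Finset.sum_congr rfl fun x hx => Finset.sum_congr rfl fun y hy => ?_
      rw [Function.update_of_ne (Finset.ne_of_mem_erase hx),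
        Function.update_of_ne (Finset.ne_of_mem_erase hy)]
    have e2 : (∑ y, if G.Adj v y ∧ p v = p y then 1 else 0 : ℕ) =
        ((G.neighborFinset v).filter (fun u => p u = p v)).card := by
      rw [← Finset.card_filter]
      congr 1
      ext y
      simp [eq_comm]
    have e3 : (∑ y, if G.Adj v y ∧ Function.update p v c v = Function.update p v c y
        then 1 else 0 : ℕ) = ((G.neighborFinset v).filter (fun u => p u = c)).card := by
      rw [← Finset.card_filter]
      congr 1
      ext y
      simp only [Finset.mem_filter, Finset.mem_univ, true_and, SimpleGraph.mem_neighborFinset,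
        Function.update_self]
      refine and_congr_right fun hy => ?_
      rw [Function.update_of_ne hy.ne', eq_comm]
    rw [e1, e2, e3] at h
    omega
  have hs := Finset.card_eq_sum_card_fiberwise (f := p) (s := G.neighborFinset v)
    (t := Finset.univ) (fun _ _ => by simp)
  have h2 := Finset.sum_le_sum (fun c (_ : c ∈ (Finset.univ : Finset (Fin b))) => key c)
  rw [← hs] at h2
  simp only [Finset.sum_const, Finset.card_univ, Fintype.card_fin, smul_eq_mul,
    SimpleGraph.card_neighborFinset_eq_degree] at h2
  rw [le_div_iff₀ (by exact_mod_cast hb), mul_comm]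
  exact_mod_cast h2
end
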